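/- Let p be an odd prime, n a positive integer, and let f ∈ F_{p^n}[X] have degree d with p not dividing d. If f is exceptional planar, then d is even. -/

import Mathlib

open Polynomial

/-- A function on a field of odd characteristic is planar if for every nonzero `ε`
the map `x ↦ f (x + ε) - f x` is a bijection. -/
def IsPlanarOdd {F : Type} [Field F] (f : F → F) : Prop :=
  ∀ ε : F, ε ≠ 0 → Function.Bijective (fun x : F => f (x + ε) - f x)

/-- A polynomial over a finite field `K` (of odd order) is exceptional planar if for
infinitely many positive integers `r` it induces a planar function on the extension
of `K` of degree `r`. -/
def IsExceptionalPlanarOdd {K : Type} [Field K] [Fintype K] (f : K[X]) : Prop :=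
  Set.Infinite {r : ℕ | 0 < r ∧ ∀ (L : Type) [Field L] [Fintype L] [Algebra K L],
      Fintype.card L = Fintype.card K ^ r →
      IsPlanarOdd (fun x : L => Polynomial.aeval x f)}

open Polynomial

/-- Transitivity of a finite group on points with equal values on invariants. -/
theorem lemT {k Ω H : Type*} [Field k] [Field Ω] [Algebra k Ω] [Group H] [Finite H]
    [MulSemiringAction H Ω] (B : Subalgebra k Ω)
    (hk : ∀ (h : H) (c : k), h • (algebraMap k Ω c) = algebraMap k Ω c)
    (hB : ∀ (h : H) (b : Ω), b ∈ B → h • b ∈ B)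
    (ω ω₁ : B →ₐ[k] k)
    (hinv : ∀ b : B, (∀ h : H, h • (b : Ω) = b) → ω b = ω₁ b) :
    ∃ h : H, ∀ b : B, ω b = ω₁ ⟨h • (b : Ω), hB h b b.2⟩ := by
  classical
  have := Fintype.ofFinite H
  let act : H → B →ₐ[k] B := fun h =>
    { toFun := fun b => ⟨h • (b : Ω), hB h b b.2⟩
      map_one' := by ext; simp
      map_mul' := by intro a b; ext; simp
      map_zero' := by ext; simp
      map_add' := by intro a b; ext; simp
      commutes' := by intro c; ext; simp [hk] }
  have hact : ∀ h (b : B), ((act h b : B) : Ω) = h • (b : Ω) := fun h b => rfl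
  have hsub : ((RingHom.ker ω : Ideal B) : Set B) ⊆
      ⋃ h ∈ ((Finset.univ : Finset H) : Set H), (RingHom.ker (ω₁.comp (act h)) : Ideal B) := by
    intro b hb
    have hb' : ω b = 0 := hb
    let N : B := ∏ h : H, act h b
    have hN : ω N = ω₁ N := by
      apply hinv
      intro h
      have : (N : Ω) = ∏ h : H, h • (b : Ω) := by simp [N, hact]
      rw [this, Finset.smul_prod']
      apply Fintype.prod_equiv (Equiv.mulLeft h)
      intro x; simp [mul_smul]
    have h0 : ω N = 0 := by
      simp only [N, map_prod]
      apply Finset.prod_eq_zero (Finset.mem_univ (1 : H))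
      have : act 1 b = b := by ext; simp [hact]
      rw [this, hb']
    rw [hN] at h0
    simp only [N, map_prod] at h0
    obtain ⟨h, -, hh⟩ := Finset.prod_eq_zero_iff.1 h0
    simp only [Set.mem_iUnion]
    exact ⟨h, by simp, hh⟩
  rw [Ideal.subset_union_prime (1 : H) (1 : H) (fun i _ _ _ => RingHom.ker_isPrime _)] at hsub
  obtain ⟨h, -, hh⟩ := hsub
  refine ⟨h, fun b => ?_⟩
  have h1 : b - algebraMap k B (ω b) ∈ RingHom.ker ω := by
    rw [RingHom.mem_ker]; simp
  have h2 := hh h1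
  rw [RingHom.mem_ker, map_sub, AlgHom.commutes] at h2
  have h3 := sub_eq_zero.1 h2
  simp only [Algebra.algebraMap_self, RingHom.id_apply] at h3
  exact h3.symm

/-- Extension of points along integral extensions of `k[X]`. -/
theorem lemE {k B : Type*} [Field k] [IsAlgClosed k] [CommRing B] [Algebra k B]
    (s : B) (hinj : Function.Injective (aeval s : k[X] →ₐ[k] B))
    (hintg : ((aeval s : k[X] →ₐ[k] B) : k[X] →+* B).IsIntegral) (τ : k) :
    ∃ ω : B →ₐ[k] k, ω s = τ := by
  letI : Algebra k[X] B := ((aeval s : k[X] →ₐ[k] B) : k[X] →+* B).toAlgebra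
  haveI : IsScalarTower k k[X] B := IsScalarTower.of_algebraMap_eq (fun c => by
    change _ = aeval s (algebraMap k k[X] c); simp)
  haveI : Algebra.IsIntegral k[X] B := ⟨hintg⟩
  let P : Ideal k[X] := RingHom.ker (aeval τ : k[X] →ₐ[k] k)
  haveI hP : P.IsMaximal := RingHom.ker_isMaximal_of_surjective _ (fun c => ⟨C c, by simp⟩)
  obtain ⟨I, hI, hc⟩ := Ideal.exists_ideal_over_maximal_of_isIntegral (S := B) P (by
    have : RingHom.ker (algebraMap k[X] B) = ⊥ :=
      (RingHom.injective_iff_ker_eq_bot _).1 hinj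
    rw [this]; exact bot_le)
  letI := Ideal.Quotient.field I
  have hmemP : ∀ f : k[X], f ∈ P ↔ aeval s f ∈ I := by
    intro f
    rw [← hc]; rfl
  have hs : (Ideal.Quotient.mk I s) = algebraMap k (B ⧸ I) τ := by
    have : aeval s (X - C τ) ∈ I := by
      rw [← hmemP]
      change aeval τ (X - C τ) = 0
      simp
    simp only [map_sub, aeval_X, aeval_C] at this
    exact (Ideal.Quotient.eq).2 this
  haveI : Algebra.IsIntegral k (B ⧸ I) := ⟨by
    intro y
    obtain ⟨b, rfl⟩ := Ideal.Quotient.mk_surjective y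
    obtain ⟨f, hf, hfb⟩ := hintg b
    refine ⟨f.map (aeval τ : k[X] →ₐ[k] k), hf.map _, ?_⟩
    have := congrArg (Ideal.Quotient.mk I) hfb
    rw [map_zero, hom_eval₂] at this
    rw [eval₂_map, ← this]
    congr 1
    apply Polynomial.ringHom_ext
    · intro c; simp
    · simp [hs]⟩
  have hbij := IsAlgClosed.algebraMap_bijective_of_isIntegral (k := k) (K := B ⧸ I)
  let e : k ≃ₐ[k] (B ⧸ I) := AlgEquiv.ofBijective (Algebra.ofId k (B ⧸ I)) hbij
  refine ⟨(e.symm : (B ⧸ I) →ₐ[k] k).comp (Ideal.Quotient.mkₐ k I), ?_⟩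
  simp only [AlgHom.comp_apply, Ideal.Quotient.mkₐ_eq_mk, hs]
  simp

/-- Interpolation. -/
theorem lemInterp {k B : Type*} [Field k] [CommRing B] [Algebra k B] (Z : Finset (B →ₐ[k] k)) :
    ∃ e : (B →ₐ[k] k) → B, ∀ ω ∈ Z, ω (e ω) = 1 ∧
      ∀ ω' ∈ Z, ω ≠ ω' → ω' (e ω) = 0 := by
  classical
  have h : ∀ ω ω' : B →ₐ[k] k, ∃ a : B, ω a = 1 ∧ (ω ≠ ω' → ω' a = 0) := by
    intro ω ω'
    by_cases hne : ω = ω'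
    · exact ⟨1, by simp, fun h => absurd hne h⟩
    · obtain ⟨b, hb⟩ : ∃ b, ω b ≠ ω' b := by
        by_contra hcon
        push Not at hcon
        exact hne (AlgHom.ext hcon)
      have hb' : ω b - ω' b ≠ 0 := sub_ne_zero.2 hb
      refine ⟨algebraMap k B (ω b - ω' b)⁻¹ * (b - algebraMap k B (ω' b)), ?_, fun _ => ?_⟩
      · simp [hb']
      · simp
  choose a ha1 ha0 using h
  refine ⟨fun ω => ∏ ω' ∈ Z, a ω ω', fun ω _ => ⟨?_, fun ω' hω' heq => ?_⟩⟩
  · rw [map_prod]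
    exact Finset.prod_eq_one (fun i _ => ha1 _ _)
  · rw [map_prod]
    exact Finset.prod_eq_zero hω' (ha0 _ _ heq)

open Polynomial

theorem lemL3 {k F : Type*} [Field k] [Field F] [Algebra k[X] F] [IsFractionRing k[X] F]
    [Algebra k F] [IsScalarTower k k[X] F] (p : ℕ) (hp : 2 ≤ p) (a : F)
    (h : ∀ e : ℕ, ∃ c : F, c ^ (p ^ e) = a) : ∃ κ : k, a = algebraMap k F κ := by
  classical
  by_cases ha : a = 0
  · exact ⟨0, by simp [ha]⟩
  have hinj : Function.Injective (algebraMap k[X] F) := IsFractionRing.injective _ _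
  obtain ⟨A, B, hAB, hadiv⟩ := IsFractionRing.div_surjective (A := k[X]) a
  have hB0 : (B : k[X]) ≠ 0 := nonZeroDivisors.ne_zero hAB
  have hA0 : A ≠ 0 := by
    rintro rfl
    simp at hadiv
    exact ha hadiv.symm
  -- first choose e so large
  let e := A.natDegree + B.natDegree
  have hN : A.natDegree + B.natDegree < p ^ e :=
    lt_of_lt_of_le Nat.lt_two_pow_self (Nat.pow_le_pow_left hp _)
  obtain ⟨c, hc⟩ := h e
  set N := p ^ e with hNdef
  let P := IsFractionRing.num k[X] c
  let R : k[X] := IsFractionRing.den k[X] c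
  have hrel : IsRelPrime P R := IsFractionRing.num_den_reduced k[X] c
  have hR0 : R ≠ 0 := nonZeroDivisors.coe_ne_zero _
  have hcdiv : algebraMap k[X] F P / algebraMap k[X] F R = c := by
    rw [← IsFractionRing.mk'_eq_div, IsFractionRing.mk'_num_den]
  have hP0 : P ≠ 0 := by
    intro h0
    rw [h0] at hcdiv
    simp at hcdiv
    rw [← hcdiv, zero_pow (by positivity)] at hc
    exact ha hc.symm
  have hcop : IsCoprime P R := hrel.isCoprime
  have heq : A * R ^ N = B * P ^ N := by
    apply hinj
    rw [← hadiv, ← hcdiv] at hc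
    have h1 : algebraMap k[X] F R ≠ 0 := by simpa using (map_ne_zero_iff _ hinj).2 hR0
    have h2 : algebraMap k[X] F B ≠ 0 := by simpa using (map_ne_zero_iff _ hinj).2 hB0
    rw [div_pow] at hc
    rw [div_eq_div_iff (pow_ne_zero _ h1) h2] at hc
    simp only [map_mul, map_pow]
    rw [← hc]; ring
  have hRB : R ^ N ∣ B := by
    have : R ^ N ∣ B * P ^ N := ⟨A, by rw [← heq]; ring⟩
    exact (hcop.symm.pow (m := N) (n := N)).dvd_of_dvd_mul_right this
  have hPA : P ^ N ∣ A := by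
    have : P ^ N ∣ A * R ^ N := ⟨B, by rw [heq]; ring⟩
    exact (hcop.pow (m := N) (n := N)).dvd_of_dvd_mul_right this
  have hdR : R.natDegree = 0 := by
    have := natDegree_le_of_dvd hRB hB0
    rw [natDegree_pow] at this
    by_contra hne
    have : N ≤ N * R.natDegree := Nat.le_mul_of_pos_right _ (Nat.pos_of_ne_zero hne)
    omega
  have hdP : P.natDegree = 0 := by
    have := natDegree_le_of_dvd hPA hA0
    rw [natDegree_pow] at this
    by_contra hne
    have : N ≤ N * P.natDegree := Nat.le_mul_of_pos_right _ (Nat.pos_of_ne_zero hne)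
    omega
  rw [eq_C_of_natDegree_eq_zero hdR, eq_C_of_natDegree_eq_zero hdP] at hcdiv
  refine ⟨(P.coeff 0 / R.coeff 0) ^ N, ?_⟩
  rw [← hc, ← hcdiv]
  have : ∀ x : k, algebraMap k[X] F (C x) = algebraMap k F x := fun x => by
    rw [IsScalarTower.algebraMap_apply k k[X] F]; rfl
  simp [this]

theorem lemL4 {k F Ω : Type*} [Field k] [IsAlgClosed k] [Field F] [Algebra k[X] F]
    [IsFractionRing k[X] F]
    [Algebra k F] [IsScalarTower k k[X] F] [Field Ω] [Algebra F Ω] [Algebra k Ω]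
    [IsScalarTower k F Ω] [FiniteDimensional F Ω] [IsGalois F Ω]
    (p : ℕ) [hp : Fact p.Prime] [CharP Ω p] (γ : Ω)
    (h : ∀ e : ℕ, ∃ c : Ω, c ^ (p ^ e) = γ) : ∃ κ : k, γ = algebraMap k Ω κ := by
  classical
  have hcoe : ∀ i, (MulSemiringAction.charpoly (Ω ≃ₐ[F] Ω) γ).coeff i ∈
      Set.range (algebraMap k Ω) := by
    intro i
    have hfix : ∀ b : Ω, (MulSemiringAction.charpoly (Ω ≃ₐ[F] Ω) b).coeff i ∈
        Set.range (algebraMap F Ω) := by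
      intro b
      rw [IsGalois.mem_range_algebraMap_iff_fixed]
      intro g
      exact MulSemiringAction.smul_coeff_charpoly (G := Ω ≃ₐ[F] Ω) b i g
    obtain ⟨a, ha⟩ := hfix γ
    obtain ⟨κ, hκ⟩ := lemL3 (k := k) (F := F) p hp.out.two_le a (by
      intro e
      obtain ⟨c, hc⟩ := h e
      obtain ⟨b, hb⟩ := hfix c
      refine ⟨b, ?_⟩
      apply (algebraMap F Ω).injective
      rw [map_pow, hb, ha]
      have : MulSemiringAction.charpoly (Ω ≃ₐ[F] Ω) γ =
          (MulSemiringAction.charpoly (Ω ≃ₐ[F] Ω) c).map (iterateFrobenius Ω p e) := by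
        rw [MulSemiringAction.charpoly_eq, MulSemiringAction.charpoly_eq, Polynomial.map_prod]
        apply Finset.prod_congr rfl
        intro g _
        simp only [Polynomial.map_sub, map_X, map_C, iterateFrobenius_def]
        rw [← hc, smul_pow']
      rw [this, coeff_map, iterateFrobenius_def])
    exact ⟨κ, by rw [← ha, hκ, ← IsScalarTower.algebraMap_apply]⟩
  have hmon : (MulSemiringAction.charpoly (Ω ≃ₐ[F] Ω) γ).Monic :=
    MulSemiringAction.monic_charpoly _ _
  have hl : MulSemiringAction.charpoly (Ω ≃ₐ[F] Ω) γ ∈ Polynomial.lifts (algebraMap k Ω) := by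
    rw [Polynomial.lifts_iff_coeff_lifts]; exact hcoe
  obtain ⟨q, hq, -, hqm⟩ := Polynomial.lifts_and_degree_eq_and_monic hl hmon
  have hintg : IsIntegral k γ := ⟨q, hqm, by
    rw [← eval_map, hq]
    exact MulSemiringAction.eval_charpoly _ _⟩
  have := IsAlgClosed.degree_eq_one_of_irreducible k (minpoly.irreducible hintg)
  obtain ⟨κ, hκ⟩ := minpoly.mem_range_of_degree_eq_one k γ this
  exact ⟨κ, hκ.symm⟩

theorem lemL5 {k F Ω : Type*} [Field k] [IsAlgClosed k] [Field F] [Algebra k[X] F]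
    [IsFractionRing k[X] F]
    [Algebra k F] [IsScalarTower k k[X] F] [Field Ω] [Algebra F Ω] [Algebra k Ω]
    [IsScalarTower k F Ω] [FiniteDimensional F Ω] [IsGalois F Ω]
    (p : ℕ) [hp : Fact p.Prime] [CharP Ω p] (m : ℕ) (β : Fin m → Ω)
    (hβ : LinearIndependent k β) :
    ∃ e0 : ℕ, ∀ e ≥ e0, ∀ s : Fin m → Ω, ∑ j, β j * s j ^ (p ^ e) = 0 → s = 0 := by
  induction m with
  | zero => exact ⟨0, fun e _ s _ => Subsingleton.elim _ _⟩
  | succ m ih =>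
    have hβ' : LinearIndependent k (fun j : Fin m => β j.succ) :=
      hβ.comp _ (Fin.succ_injective m)
    obtain ⟨e1, he1⟩ := ih _ hβ'
    have hp0 : ∀ e : ℕ, p ^ e ≠ 0 := fun e => pow_ne_zero _ hp.out.ne_zero
    by_cases hcase : ∃ e ≥ e1, ¬ ∃ s : Fin m → Ω, β 0 + ∑ j, β j.succ * s j ^ (p ^ e) = 0
    · obtain ⟨e, hee, hno⟩ := hcase
      refine ⟨e, fun e' he' s hs => ?_⟩
      rw [Fin.sum_univ_succ] at hs
      have hs0 : s 0 = 0 := by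
        by_contra hs0
        apply hno
        refine ⟨fun j => (s j.succ / s 0) ^ (p ^ (e' - e)), ?_⟩
        have hpow : p ^ (e' - e) * p ^ e = p ^ e' := by
          rw [← pow_add]; congr 1; omega
        simp only [← pow_mul, hpow]
        have h0 : s 0 ^ (p ^ e') ≠ 0 := pow_ne_zero _ hs0
        have : (β 0 + ∑ j : Fin m, β j.succ * (s j.succ / s 0) ^ p ^ e') * s 0 ^ (p ^ e') = 0 := by
          rw [add_mul, Finset.sum_mul, ← hs]
          congr 1
          apply Finset.sum_congr rfl
          intro j _
          rw [div_pow]; field_simp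
        exact (mul_eq_zero.1 this).resolve_right h0
      rw [hs0, zero_pow (hp0 _), mul_zero, zero_add] at hs
      have := he1 e' (hee.trans he') (fun j => s j.succ) hs
      ext j
      refine Fin.cases hs0 (fun j => ?_) j
      exact congrFun this j
    · exfalso
      push Not at hcase
      choose! S hS using hcase
      have key : ∀ j, ∀ e ≥ e1, S e j ^ (p ^ e) = S e1 j ^ (p ^ e1) := by
        intro j e he
        have hpow : p ^ (e - e1) * p ^ e1 = p ^ e := by
          rw [← pow_add]; congr 1; omega
        have h1 := he1 e1 le_rfl (fun j => S e j ^ (p ^ (e - e1)) - S e1 j) (by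
          have a := hS e he
          have b := hS e1 le_rfl
          have : ∀ j, β j.succ * (S e j ^ (p ^ (e - e1)) - S e1 j) ^ p ^ e1 =
            β j.succ * S e j ^ p ^ e - β j.succ * S e1 j ^ p ^ e1 := by
            intro j
            rw [sub_pow_char_pow, ← pow_mul, hpow, mul_sub]
          simp only [this, Finset.sum_sub_distrib]
          linear_combination a - b)
        have h2 := sub_eq_zero.1 (congrFun h1 j)
        rw [← h2, ← pow_mul, hpow]
      have hk : ∀ j, ∃ κ : k, S e1 j ^ (p ^ e1) = algebraMap k Ω κ := by
        intro j
        apply lemL4 (F := F) p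
        intro e
        rcases le_total e1 e with he | he
        · exact ⟨S e j, key j e he⟩
        · refine ⟨S e1 j ^ (p ^ (e1 - e)), ?_⟩
          rw [← pow_mul, ← pow_add]
          congr 2; omega
      choose κ hκ using hk
      have h3 := hS e1 le_rfl
      rw [Fintype.linearIndependent_iff] at hβ
      have h4 := hβ (Fin.cons 1 κ) (by
        rw [Fin.sum_univ_succ, ← h3]
        simp only [Fin.cons_zero, one_smul, Fin.cons_succ]
        congr 1
        apply Finset.sum_congr rfl
        intro j _
        rw [hκ, Algebra.smul_def, mul_comm]) 0
      simp at h4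

open Polynomial

set_option linter.unusedSectionVars false

section Bounded
variable {k M : Type*} [Field k] [CommRing M] [IsDomain M] [Algebra k M] [Algebra k[X] M]
  [IsScalarTower k k[X] M] {D : ℕ}

/-- Elements all of whose coordinates have degree less than `v`. -/
def BdS (b : Module.Basis (Fin D) k[X] M) (v : ℕ) : Submodule k M where
  carrier := {m | ∀ i, b.repr m i ∈ degreeLT k v}
  add_mem' := by
    intro x y hx hy i
    rw [map_add, Finsupp.add_apply]
    exact Submodule.add_mem _ (hx i) (hy i)
  zero_mem' := by
    intro i; simp
  smul_mem' := by
    intro c x hx i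
    have : c • x = (C c : k[X]) • x := by
      rw [← algebraMap_smul k[X] c x]; rfl
    rw [this, map_smul, Finsupp.smul_apply, smul_eq_mul, ← smul_eq_C_mul]
    exact Submodule.smul_mem _ _ (hx i)

theorem mem_BdS (b : Module.Basis (Fin D) k[X] M) (v : ℕ) (m : M) :
    m ∈ BdS b v ↔ ∀ i, b.repr m i ∈ degreeLT k v := Iff.rfl

theorem BdS_mono (b : Module.Basis (Fin D) k[X] M) {v w : ℕ} (h : v ≤ w) : BdS b v ≤ BdS b w :=
  fun _ hm i => degreeLT_mono h (hm i)

theorem BdS_exists (b : Module.Basis (Fin D) k[X] M) (m : M) : ∃ v, m ∈ BdS b v := by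
  refine ⟨∑ i, ((b.repr m i).natDegree + 1), fun i => ?_⟩
  rw [mem_degreeLT]
  refine lt_of_le_of_lt degree_le_natDegree ?_
  norm_cast
  have := Finset.single_le_sum (f := fun i => (b.repr m i).natDegree + 1)
    (fun _ _ => Nat.zero_le _) (Finset.mem_univ i)
  omega

theorem BdS_exists_fin (b : Module.Basis (Fin D) k[X] M) {ι : Type*} (s : Finset ι) (m : ι → M) :
    ∃ v, ∀ i ∈ s, m i ∈ BdS b v := by
  choose f hf using fun i => BdS_exists b (m i)
  exact ⟨s.sup f, fun i hi => BdS_mono b (Finset.le_sup hi) (hf i)⟩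

/-- The linear equivalence describing `BdS`. -/
noncomputable def BdSEquiv (b : Module.Basis (Fin D) k[X] M) (v : ℕ) :
    BdS b v ≃ₗ[k] (Fin D → degreeLT k v) where
  toFun m i := ⟨b.repr m.1 i, m.2 i⟩
  map_add' x y := by ext; simp
  map_smul' c x := by
    ext i : 2
    have : c • (x : M) = (C c : k[X]) • (x : M) := by
      rw [← algebraMap_smul k[X] c (x : M)]; rfl
    simp [this, smul_eq_C_mul]
  invFun f := ⟨∑ i, (f i : k[X]) • b i, fun i => by
    rw [b.repr_sum_self]; exact (f i).2⟩
  left_inv x := by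
    ext; simp [b.sum_repr]
  right_inv f := by
    ext i : 2
    simp only
    rw [b.repr_sum_self]

instance BdS_fin (b : Module.Basis (Fin D) k[X] M) (v : ℕ) : FiniteDimensional k (BdS b v) :=
  LinearEquiv.finiteDimensional
    ((BdSEquiv b v).trans (LinearEquiv.piCongrRight fun _ => degreeLTEquiv k v)).symm

theorem BdS_finrank (b : Module.Basis (Fin D) k[X] M) (v : ℕ) :
    Module.finrank k (BdS b v) = D * v := by
  rw [LinearEquiv.finrank_eq
    ((BdSEquiv b v).trans (LinearEquiv.piCongrRight fun _ => degreeLTEquiv k v))]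
  rw [Module.finrank_pi_fintype]
  simp

theorem mul_mem_degreeLT {P Q : k[X]} {v w : ℕ} (hP : P ∈ degreeLT k v) (hQ : Q ∈ degreeLT k w) :
    P * Q ∈ degreeLT k (v + w) := by
  rw [mem_degreeLT] at *
  by_cases hP0 : P = 0
  · simp [hP0]
  by_cases hQ0 : Q = 0
  · simp [hQ0]
  rw [degree_mul]
  rw [degree_eq_natDegree hP0] at *
  rw [degree_eq_natDegree hQ0] at *
  norm_cast at *
  omega

theorem BdS_smul (b : Module.Basis (Fin D) k[X] M) {v w : ℕ} {P : k[X]} {m : M}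
    (hP : P ∈ degreeLT k v) (hm : m ∈ BdS b w) : P • m ∈ BdS b (v + w) := by
  intro i
  rw [map_smul, Finsupp.smul_apply, smul_eq_mul]
  exact mul_mem_degreeLT hP (hm i)

theorem BdS_mul (b : Module.Basis (Fin D) k[X] M) :
    ∃ c0 : ℕ, ∀ v w x y, x ∈ BdS b v → y ∈ BdS b w → x * y ∈ BdS b (v + w + c0) := by
  obtain ⟨c0, hc0⟩ := BdS_exists_fin b (Finset.univ : Finset (Fin D × Fin D))
    (fun ij => b ij.1 * b ij.2)
  refine ⟨c0, fun v w x y hx hy => ?_⟩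
  rw [← b.sum_repr x, ← b.sum_repr y, Finset.sum_mul_sum]
  refine Submodule.sum_mem _ fun i _ => Submodule.sum_mem _ fun j _ => ?_
  rw [smul_mul_smul_comm]
  exact BdS_smul b (mul_mem_degreeLT (hx i) (hy j)) (hc0 (i, j) (Finset.mem_univ _))

theorem BdS_semi (b : Module.Basis (Fin D) k[X] M) (R : Set (M →+* M))
    (hR1 : ∀ ρ ∈ R, ∀ P : k[X], ∃ P' : k[X], P'.degree ≤ P.degree ∧
      ρ (algebraMap k[X] M P) = algebraMap k[X] M P')
    (hR2 : ∀ m : M, ∃ c, ∀ ρ ∈ R, ρ m ∈ BdS b c) :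
    ∃ c0 : ℕ, ∀ v x, x ∈ BdS b v → ∀ ρ ∈ R, ρ x ∈ BdS b (v + c0) := by
  choose f hf using hR2
  refine ⟨Finset.univ.sup (fun i => f (b i)), fun v x hx ρ hρ => ?_⟩
  rw [← b.sum_repr x, map_sum]
  refine Submodule.sum_mem _ fun i _ => ?_
  rw [Algebra.smul_def, map_mul]
  obtain ⟨P', hP', hPe⟩ := hR1 ρ hρ (b.repr x i)
  rw [hPe, ← Algebra.smul_def]
  refine BdS_smul b ?_ (BdS_mono b (Finset.le_sup (f := fun i => f (b i)) (Finset.mem_univ i)) (hf (b i) ρ hρ))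
  rw [mem_degreeLT]
  exact lt_of_le_of_lt hP' (mem_degreeLT.1 (hx i))

theorem BdS_pow (b : Module.Basis (Fin D) k[X] M) (c0 : ℕ)
    (h : ∀ v w x y, x ∈ BdS b v → y ∈ BdS b w → x * y ∈ BdS b (v + w + c0))
    (v : ℕ) (x : M) (hx : x ∈ BdS b v) (m : ℕ) (hm : 1 ≤ m) :
    x ^ m ∈ BdS b (m * (v + c0)) := by
  induction m, hm using Nat.le_induction with
  | base => rw [pow_one]; exact BdS_mono b (by omega) hx
  | succ m hm ih =>
    rw [pow_succ]
    exact BdS_mono b (by ring_nf; omega) (h _ _ _ _ ih hx)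

theorem zero_count (b : Module.Basis (Fin D) k[X] M) (c0 : ℕ)
    (h : ∀ v w x y, x ∈ BdS b v → y ∈ BdS b w → x * y ∈ BdS b (v + w + c0))
    (w : ℕ) (c : M) (hc : c ≠ 0) (hw : c ∈ BdS b w) (Z : Finset (M →ₐ[k] k))
    (hZ : ∀ ω ∈ Z, ω c = 0) : Z.card ≤ D * (w + c0) := by
  classical
  obtain ⟨e, he⟩ := lemInterp Z
  obtain ⟨m, hm⟩ := BdS_exists_fin b Z e
  let Φ : ((Z → k) × BdS b m) →ₗ[k] BdS b (m + w + c0) :=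
    LinearMap.codRestrict (BdS b (m + w + c0))
      ((Fintype.linearCombination k (fun ω : Z => e ω)).coprod
        ((LinearMap.mulLeft k c).comp (BdS b m).subtype)) (by
        rintro ⟨l, x⟩
        simp only [LinearMap.coprod_apply, Fintype.linearCombination_apply, LinearMap.comp_apply,
          Submodule.subtype_apply, LinearMap.mulLeft_apply]
        refine Submodule.add_mem _ (Submodule.sum_mem _ fun ω _ => Submodule.smul_mem _ _ ?_) ?_
        · exact BdS_mono b (by omega) (hm ω ω.2)
        · exact BdS_mono b (by omega) (h _ _ _ _ hw x.2))
  have hΦ : ∀ l x, ((Φ (l, x) : BdS b (m + w + c0)) : M) = ∑ ω : Z, l ω • e ω + c * x := by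
    intro l x
    simp [Φ, Fintype.linearCombination_apply]
  have hinj : Function.Injective Φ := by
    rw [← LinearMap.ker_eq_bot, LinearMap.ker_eq_bot']
    rintro ⟨l, x⟩ hlx
    have h0 : ∑ ω : Z, l ω • e ω + c * (x : M) = 0 := by
      rw [← hΦ, hlx]; rfl
    have hl : l = 0 := by
      ext ω'
      have h1 := congrArg (ω' : M →ₐ[k] k) h0
      rw [map_add, map_sum, map_mul, hZ ω' ω'.2, zero_mul, add_zero, map_zero,
        Finset.sum_eq_single ω'] at h1
      · rw [map_smul, (he ω' ω'.2).1] at h1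
        simpa using h1
      · intro ω _ hne
        rw [map_smul, (he ω ω.2).2 ω' ω'.2 (fun h => hne (Subtype.ext h)), smul_zero]
      · simp
    subst hl
    simp only [Pi.zero_apply, zero_smul, Finset.sum_const_zero, zero_add] at h0
    have hx : (x : M) = 0 := (mul_eq_zero.1 h0).resolve_left hc
    ext1
    · rfl
    · exact Subtype.ext hx
  have hrank := LinearMap.finrank_le_finrank_of_injective hinj
  rw [Module.finrank_prod, BdS_finrank, BdS_finrank] at hrank
  simp only [Module.finrank_fintype_fun_eq_card, Fintype.card_coe] at hrank
  have : D * (m + w + c0) = D * m + D * (w + c0) := by ring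
  omega

theorem bombieri [IsAlgClosed k] (b : Module.Basis (Fin D) k[X] M) (p : ℕ) [hp : Fact p.Prime]
    [CharP k p] [CharP M p]
    (hL5 : ∀ (m : ℕ) (β : Fin m → M), LinearIndependent k β → ∃ e0 : ℕ, ∀ e ≥ e0,
      ∀ s : Fin m → M, ∑ j, β j * s j ^ (p ^ e) = 0 → s = 0)
    (R : Set (M →+* M))
    (hR1 : ∀ ρ ∈ R, ∀ P : k[X], ∃ P' : k[X], P'.degree ≤ P.degree ∧
      ρ (algebraMap k[X] M P) = algebraMap k[X] M P')
    (hR2 : ∀ m : M, ∃ c, ∀ ρ ∈ R, ρ m ∈ BdS b c)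
    (N : ℕ) (hN : 1 ≤ N) :
    ∃ C2 e0 : ℕ, ∀ e ≥ e0, ∀ ρ ∈ R, ∀ Z : Finset (M →ₐ[k] k),
      (∀ ω ∈ Z, ∀ x, ω (ρ x) = ω x ^ (p ^ e)) →
      2 * N * Z.card ≤ (2 * N + 1) * p ^ e + C2 := by
  classical
  have hD : 0 < D := by
    rcases Nat.eq_zero_or_pos D with h0 | h0
    · subst h0
      exfalso
      have := b.sum_repr (1 : M)
      simp at this
    · exact h0
  obtain ⟨c1, hc1⟩ := BdS_mul b
  obtain ⟨c2, hc2⟩ := BdS_semi b R hR1 hR2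
  set c0 := max c1 c2 with hc0def
  have hmul : ∀ v w x y, x ∈ BdS b v → y ∈ BdS b w → x * y ∈ BdS b (v + w + c0) :=
    fun v w x y hx hy => BdS_mono b (by omega) (hc1 v w x y hx hy)
  have hsemi : ∀ v x, x ∈ BdS b v → ∀ ρ ∈ R, ρ x ∈ BdS b (v + c0) :=
    fun v x hx ρ hρ => BdS_mono b (by omega) (hc2 v x hx ρ hρ)
  let μ := 2 * N * (D * (1 + c0))
  let q0 := p ^ μ
  have hq0 : 2 * N * (D * (1 + c0)) ≤ q0 :=
    (le_of_lt Nat.lt_two_pow_self).trans (Nat.pow_le_pow_left hp.out.two_le _)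
  have hq0pos : 1 ≤ q0 := Nat.one_le_pow _ _ hp.out.pos
  let v := q0 / D + 1
  have hv1 : q0 + 1 ≤ D * v := by
    have := Nat.lt_mul_div_succ q0 hD
    exact this
  have hv2 : 2 * N * (D * (v + c0)) ≤ (2 * N + 1) * q0 := by
    have h1 : D * (q0 / D) ≤ q0 := Nat.mul_div_le q0 D
    have h2 : 2 * N * (D * (v + c0)) = 2 * N * (D * (q0 / D)) + 2 * N * (D * (1 + c0)) := by
      simp only [v]; ring
    have h3 : 2 * N * (D * (q0 / D)) ≤ 2 * N * q0 := Nat.mul_le_mul_left _ h1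
    rw [h2]
    calc _ ≤ 2 * N * q0 + q0 := Nat.add_le_add h3 hq0
      _ = _ := by ring
  let u := q0 * c0 + v + 2 * c0 + 1
  let W := q0 * (u + c0) + v + 2 * c0
  have huv : W < D * (u * v) := by
    have : (q0 + 1) * u ≤ D * v * u := Nat.mul_le_mul_right _ hv1
    have h2 : D * (u * v) = D * v * u := by ring
    rw [h2]
    refine lt_of_lt_of_le ?_ this
    have h3 : (q0 + 1) * u = q0 * u + u := by ring
    have h4 : W = q0 * u + (q0 * c0 + v + 2 * c0) := by simp only [W]; ring
    rw [h3, h4]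
    simp only [u]
    omega
  let A := Module.finBasisOfFinrankEq k (BdS b v) (BdS_finrank b v)
  let B := Module.finBasisOfFinrankEq k (BdS b u) (BdS_finrank b u)
  have hAli : LinearIndependent k (fun i => (A i : M)) :=
    A.linearIndependent.map' (BdS b v).subtype (Submodule.ker_subtype _)
  have hBli : LinearIndependent k (fun i => (B i : M)) :=
    B.linearIndependent.map' (BdS b u).subtype (Submodule.ker_subtype _)
  obtain ⟨e0, he0⟩ := hL5 _ _ hBli
  refine ⟨2 * N * (D * (u + 2 * c0)), μ + e0, fun e he ρ hρ Z hZ => ?_⟩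
  obtain ⟨e', rfl⟩ : ∃ e', e = e' + μ := ⟨e - μ, by omega⟩
  have he' : e0 ≤ e' := by omega
  let Q' := p ^ e'
  have hQ'1 : 1 ≤ Q' := Nat.one_le_pow _ _ hp.out.pos
  have hQ : p ^ (e' + μ) = Q' * q0 := pow_add _ _ _
  -- the linear dependence
  have hmemT : ∀ ji : Fin (D * u) × Fin (D * v), (B ji.1 : M) ^ q0 * ρ (A ji.2) ∈ BdS b W := by
    rintro ⟨j, i⟩
    exact BdS_mono b (by simp only [W]; omega) (hmul _ _ _ _ (BdS_pow b c0 hmul u _ (B j).2 q0 hq0pos)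
      (hsemi v _ (A i).2 ρ hρ))
  have hdep : ¬ LinearIndependent k
      (fun ji : Fin (D * u) × Fin (D * v) => (⟨_, hmemT ji⟩ : BdS b W)) := by
    intro hli
    have := hli.fintype_card_le_finrank
    rw [BdS_finrank] at this
    simp only [Fintype.card_prod, Fintype.card_fin] at this
    have h2 : D * u * (D * v) = D * (D * (u * v)) := by ring
    rw [h2] at this
    have := Nat.le_of_mul_le_mul_left this hD
    omega
  rw [Fintype.not_linearIndependent_iff] at hdep
  obtain ⟨κ, hκ, ⟨j0, i0⟩, hκ0⟩ := hdep
  have hrel : ∑ j, ∑ i, κ (j, i) • ((B j : M) ^ q0 * ρ (A i)) = 0 := by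
    have := congrArg (Subtype.val) hκ
    rw [Fintype.sum_prod_type] at this
    simpa using this
  have hroot : ∀ ji, ∃ z : k, z ^ (Q' * q0) = κ ji := fun ji =>
    IsAlgClosed.exists_pow_nat_eq _ (by positivity)
  choose κ' hκ' using hroot
  let s : Fin (D * u) → M := fun j => ∑ i, κ' (j, i) • (A i : M)
  have hs : ∀ j, s j ∈ BdS b v := fun j =>
    Submodule.sum_mem _ fun i _ => Submodule.smul_mem _ _ (A i).2
  let c : M := ∑ j, (B j : M) * s j ^ Q'
  have hcne : c ≠ 0 := by
    intro hc
    have h1 := he0 e' he' s hc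
    have h2 := congrFun h1 j0
    have h3 := (Fintype.linearIndependent_iff.1 hAli) (fun i => κ' (j0, i)) h2 i0
    apply hκ0
    rw [← hκ' (j0, i0), h3]
    exact zero_pow (by positivity)
  have hcB : c ∈ BdS b (u + Q' * (v + c0) + c0) :=
    Submodule.sum_mem _ fun j _ => hmul _ _ _ _ (B j).2 (BdS_pow b c0 hmul v _ (hs j) Q' hQ'1)
  have hspow : ∀ j, s j ^ (Q' * q0) = ∑ i, κ (j, i) • (A i : M) ^ (Q' * q0) := by
    intro j
    simp only [s]
    have hpq : Q' * q0 = p ^ (e' + μ) := hQ.symm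
    rw [hpq, sum_pow_char_pow]
    refine Finset.sum_congr rfl fun i _ => ?_
    rw [_root_.smul_pow, ← hpq, hκ']
  have hcZ : ∀ ω ∈ Z, ω c = 0 := by
    intro ω hω
    have h1 : c ^ q0 = ∑ j, (B j : M) ^ q0 * ∑ i, κ (j, i) • (A i : M) ^ (Q' * q0) := by
      simp only [c]
      rw [show q0 = p ^ μ from rfl, sum_pow_char_pow]
      refine Finset.sum_congr rfl fun j _ => ?_
      rw [mul_pow, ← pow_mul]
      rw [show Q' * p ^ μ = Q' * q0 from rfl, hspow]
    have h2 : ω (c ^ q0) = 0 := by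
      rw [h1, ← map_zero ω, ← hrel]
      simp only [map_sum, map_mul, map_smul, map_pow, Finset.mul_sum]
      refine Finset.sum_congr rfl fun j _ => Finset.sum_congr rfl fun i _ => ?_
      rw [hZ ω hω, hQ, mul_smul_comm]
    rw [map_pow] at h2
    exact pow_eq_zero_iff (by omega) |>.1 h2
  have hfin := zero_count b c0 hmul _ c hcne hcB Z hcZ
  rw [hQ]
  calc 2 * N * Z.card ≤ 2 * N * (D * (u + Q' * (v + c0) + c0 + c0)) := Nat.mul_le_mul_left _ hfin
    _ = Q' * (2 * N * (D * (v + c0))) + 2 * N * (D * (u + 2 * c0)) := by ring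
    _ ≤ Q' * ((2 * N + 1) * q0) + 2 * N * (D * (u + 2 * c0)) :=
        Nat.add_le_add_right (Nat.mul_le_mul_left _ hv2) _
    _ = _ := by ring

end Bounded

open Polynomial

set_option linter.unusedSectionVars false

/-- Extension of ring homs along splitting fields. -/
theorem exists_lift_splitting {F Ω L : Type*} [Field F] [Field Ω] [Field L] [Algebra F Ω]
    (P : F[X]) [IsSplittingField F Ω P] (φ : F →+* L) (h : (P.map φ).Splits) :
    ∃ ρ : Ω →+* L, ∀ a, ρ (algebraMap F Ω a) = φ a := by
  letI : Algebra F L := φ.toAlgebra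
  let ψ : Ω →ₐ[F] L := IsSplittingField.lift Ω P h
  exact ⟨ψ, fun a => ψ.commutes a⟩

section Transc
variable {k F Ω : Type*} [Field k] [IsAlgClosed k] [Field F] [Algebra k[X] F]
  [IsFractionRing k[X] F] [Algebra k F] [IsScalarTower k k[X] F] [Field Ω] [Algebra F Ω]
  [Algebra k Ω] [IsScalarTower k F Ω]

/-- The base variable. -/
noncomputable def tv (k F Ω : Type*) [Field k] [Field F] [Algebra k[X] F] [Field Ω]
  [Algebra F Ω] : Ω := algebraMap F Ω (algebraMap k[X] F X)

theorem aeval_tv (P : k[X]) :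
    aeval (tv k F Ω) P = algebraMap F Ω (algebraMap k[X] F P) := by
  have : ((aeval (tv k F Ω) : k[X] →ₐ[k] Ω) : k[X] →+* Ω) =
      (algebraMap F Ω).comp (algebraMap k[X] F) := by
    apply Polynomial.ringHom_ext
    · intro a
      simp only [RingHom.coe_coe, aeval_C, RingHom.comp_apply]
      rw [IsScalarTower.algebraMap_apply k F Ω, IsScalarTower.algebraMap_apply k k[X] F]
      rfl
    · simp [tv]
  exact congrArg (fun f : k[X] →+* Ω => f P) this

theorem aeval_tv_inj : Function.Injective (aeval (tv k F Ω) : k[X] →ₐ[k] Ω) := by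
  intro P Q h
  rw [aeval_tv, aeval_tv] at h
  exact IsFractionRing.injective k[X] F ((algebraMap F Ω).injective h)

theorem tv_ne_const (c : k) : tv k F Ω ≠ algebraMap k Ω c := by
  intro h
  have : aeval (tv k F Ω) (X : k[X]) = aeval (tv k F Ω) (C c) := by simpa using h
  exact X_ne_C c (aeval_tv_inj (F := F) (Ω := Ω) this)

theorem root_transc (g : k[X]) (x : Ω) (hx : aeval x g = tv k F Ω) :
    Function.Injective (aeval x : k[X] →ₐ[k] Ω) := by
  rw [← transcendental_iff_injective]
  intro halg
  have hintg : IsIntegral k x := halg.isIntegral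
  have := IsAlgClosed.degree_eq_one_of_irreducible k (minpoly.irreducible hintg)
  obtain ⟨κ, hκ⟩ := minpoly.mem_range_of_degree_eq_one k x this
  rw [← hκ, aeval_algebraMap_apply] at hx
  exact tv_ne_const _ hx.symm

/-- The generic polynomial. -/
noncomputable def gp (F : Type*) [Field F] [Algebra k[X] F] [Algebra k F] (g : k[X]) : F[X] :=
  g.map (algebraMap k F) - C (algebraMap k[X] F X)

theorem gp_map (g : k[X]) :
    (gp F g).map (algebraMap F Ω) = g.map (algebraMap k Ω) - C (tv k F Ω) := by
  rw [gp, Polynomial.map_sub, map_C, Polynomial.map_map, ← IsScalarTower.algebraMap_eq, tv]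

theorem aeval_gp (g : k[X]) (x : Ω) : aeval x (gp F g) = aeval x g - tv k F Ω := by
  rw [← eval_map_algebraMap, gp_map, eval_sub, eval_C, eval_map_algebraMap]

theorem gp_natDegree (g : k[X]) (hg : 0 < g.natDegree) : (gp F g).natDegree = g.natDegree := by
  rw [gp, natDegree_sub_C, natDegree_map]

theorem gp_ne_zero (g : k[X]) (hg : 0 < g.natDegree) : gp F g ≠ 0 := by
  intro h
  have := gp_natDegree (F := F) g hg
  rw [h, natDegree_zero] at this
  omega

theorem gp_separable (g : k[X]) (hg' : derivative g ≠ 0) : (gp F g).Separable := by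
  rw [separable_def, isCoprime_iff_aeval_ne_zero_of_isAlgClosed (K := AlgebraicClosure F)
    (k := F)]
  intro x
  by_contra hcon
  push Not at hcon
  obtain ⟨h1, h2⟩ := hcon
  rw [aeval_gp, sub_eq_zero] at h1
  have h3 : aeval x (derivative g) = 0 := by
    have : derivative (gp F g) = (derivative g).map (algebraMap k F) := by
      simp [gp, derivative_map]
    rw [this, aeval_map_algebraMap] at h2
    exact h2
  have := root_transc g x h1
  exact hg' (this (by rw [h3, map_zero]))

end Transc

section Gal
variable {k F Ω : Type*} [Field k] [IsAlgClosed k] [Field F] [Algebra k[X] F]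
  [IsFractionRing k[X] F] [Algebra k F] [IsScalarTower k k[X] F] [Field Ω] [Algebra F Ω]
  [Algebra k Ω] [IsScalarTower k F Ω]

theorem exists_roots (g : k[X]) (hg : 0 < g.natDegree) (hg' : derivative g ≠ 0)
    [IsSplittingField F Ω (gp F g)] :
    ∃ S : Finset Ω, (∀ x, x ∈ S ↔ aeval x g = tv k F Ω) ∧ S.card = g.natDegree ∧
      g.map (algebraMap k Ω) - C (tv k F Ω) =
        C (algebraMap k Ω g.leadingCoeff) * ∏ x ∈ S, (X - C x) := by
  classical
  have hs : ((gp F g).map (algebraMap F Ω)).Splits := IsSplittingField.splits Ω (gp F g)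
  have hnd : ((gp F g).map (algebraMap F Ω)).roots.Nodup :=
    nodup_roots (gp_separable g hg').map
  refine ⟨((gp F g).map (algebraMap F Ω)).roots.toFinset, ?_, ?_, ?_⟩
  · intro x
    rw [Multiset.mem_toFinset, mem_roots (by
      rw [Polynomial.map_ne_zero_iff (algebraMap F Ω).injective]; exact gp_ne_zero g hg),
      IsRoot.def, eval_map_algebraMap, aeval_gp, sub_eq_zero]
  · rw [Multiset.toFinset_card_of_nodup hnd, ← hs.natDegree_eq_card_roots, natDegree_map,
      gp_natDegree g hg]
  · have h1 := hs.eq_prod_roots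
    rw [gp_map] at h1 hnd ⊢
    have hlc : (g.map (algebraMap k Ω) - C (tv k F Ω)).leadingCoeff =
        algebraMap k Ω g.leadingCoeff := by
      rw [leadingCoeff_sub_of_degree_lt, leadingCoeff_map]
      refine lt_of_le_of_lt degree_C_le ?_
      rw [degree_map]
      exact natDegree_pos_iff_degree_pos.1 hg
    rw [hlc] at h1
    conv_lhs => rw [h1]
    congr 1
    rw [Finset.prod_multiset_map_count, Finset.prod_congr rfl]
    intro x hx
    rw [Multiset.count_eq_one_of_mem hnd (Multiset.mem_toFinset.1 hx), pow_one]

theorem gal_trans (g : k[X]) [Normal F Ω] (x y : Ω)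
    (hx : aeval x g = tv k F Ω) (hy : aeval y g = tv k F Ω) :
    ∃ σ : Ω ≃ₐ[F] Ω, σ x = y := by
  classical
  have hΦ : ∀ z : Ω, aeval z g = tv k F Ω → ∀ H : k[X][X],
      eval₂ ((algebraMap F Ω).comp (algebraMap k[X] F)) z H =
        aeval z (eval₂ (compRingHom g) X H) := by
    intro z hz H
    have : (eval₂RingHom ((algebraMap F Ω).comp (algebraMap k[X] F)) z) =
        ((aeval z : k[X] →ₐ[k] Ω) : k[X] →+* Ω).comp (eval₂RingHom (compRingHom g) X) := by
      apply Polynomial.ringHom_ext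
      · intro a
        simp only [coe_eval₂RingHom, eval₂_C, RingHom.comp_apply, RingHom.coe_coe,
          coe_compRingHom_apply]
        rw [aeval_comp, hz, aeval_tv]
      · simp
    exact congrArg (fun f : k[X][X] →+* Ω => f H) this
  have key : ∀ h : F[X], aeval x h = 0 → aeval y h = 0 := by
    intro h hh
    obtain ⟨r, hrmem, hr⟩ := IsLocalization.integerNormalization_spec (nonZeroDivisors k[X]) h
    set H := IsLocalization.integerNormalization (nonZeroDivisors k[X]) h with hH
    have hval : ∀ z : Ω, eval₂ ((algebraMap F Ω).comp (algebraMap k[X] F)) z H =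
        algebraMap F Ω (algebraMap k[X] F r) * aeval z h := by
      intro z
      rw [← eval₂_map, hr]
      have : (r : k[X]) • h = C (algebraMap k[X] F r) * h := by
        rw [← algebraMap_smul F (r : k[X]) h, smul_eq_C_mul]
      rw [this, eval₂_mul, eval₂_C, aeval_def]
    have hr0 : algebraMap F Ω (algebraMap k[X] F r) ≠ 0 := by
      rw [map_ne_zero_iff _ (algebraMap F Ω).injective,
        map_ne_zero_iff _ (IsFractionRing.injective k[X] F)]
      exact nonZeroDivisors.ne_zero hrmem
    have h1 := hval x
    rw [hh, mul_zero, hΦ x hx] at h1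
    have h2 := root_transc g x hx (h1.trans (map_zero _).symm)
    have h3 := hval y
    rw [hΦ y hy, h2, map_zero] at h3
    exact (mul_eq_zero.1 h3.symm).resolve_left hr0
  have hxi : IsIntegral F x := Normal.isIntegral inferInstance x
  obtain ⟨σ, hσ⟩ := minpoly.exists_algEquiv_of_root (K := F) (L := Ω) hxi.isAlgebraic
    (key _ (minpoly.aeval F x))
  exact ⟨σ.symm, by rw [← hσ]; simp⟩

/-- Semilinear endomorphisms. -/
def IsSemi (k F : Type*) {Ω : Type*} [Field k] [Field F] [Algebra k[X] F] [Field Ω]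
    [Algebra F Ω] [Algebra k Ω] (Q : ℕ) (ρ : Ω →+* Ω) : Prop :=
  (∀ c : k, ρ (algebraMap k Ω c) = algebraMap k Ω (c ^ Q)) ∧ ρ (tv k F Ω) = tv k F Ω

theorem exists_semi (p : ℕ) [Fact p.Prime] [CharP k p] (g : k[X])
    [IsSplittingField F Ω (gp F g)] (s : ℕ) (hc : ∀ i, g.coeff i ^ (p ^ s) = g.coeff i) :
    ∃ ρ : Ω →+* Ω, IsSemi k F (p ^ s) ρ := by
  let φ0 : k[X] →+* Ω := ((algebraMap F Ω).comp (algebraMap k[X] F)).comp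
    (mapRingHom (iterateFrobenius k p s))
  have hφ0 : Function.Injective φ0 :=
    ((algebraMap F Ω).injective.comp (IsFractionRing.injective k[X] F)).comp
      (map_injective _ (iterateFrobenius k p s).injective)
  let φ : F →+* Ω := IsFractionRing.lift hφ0
  have hφ : ∀ P, φ (algebraMap k[X] F P) = φ0 P := fun P => IsFractionRing.lift_algebraMap hφ0 P
  have hφk : ∀ c : k, φ (algebraMap k F c) = algebraMap k Ω (c ^ (p ^ s)) := by
    intro c
    rw [IsScalarTower.algebraMap_apply k k[X] F, hφ]
    simp only [φ0, RingHom.comp_apply, coe_mapRingHom]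
    rw [IsScalarTower.algebraMap_apply k F Ω, IsScalarTower.algebraMap_apply k k[X] F]
    simp [iterateFrobenius_def]
  have hφt : φ (algebraMap k[X] F X) = tv k F Ω := by
    rw [hφ]; simp [φ0, tv]
  have hmap : (gp F g).map φ = (gp F g).map (algebraMap F Ω) := by
    rw [gp_map, gp, Polynomial.map_sub, map_C, hφt]
    congr 1
    ext i
    simp only [coeff_map]
    rw [hφk, hc]
  obtain ⟨ρ, hρ⟩ := exists_lift_splitting (Ω := Ω) (gp F g) φ (by
    rw [hmap]; exact IsSplittingField.splits Ω (gp F g))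
  refine ⟨ρ, fun c => ?_, ?_⟩
  · rw [IsScalarTower.algebraMap_apply k F Ω, hρ, hφk]
  · rw [tv, hρ, hφt, tv]

theorem semi_aeval (Q : ℕ) (ρ : Ω →+* Ω) (hρ : ∀ c : k, ρ (algebraMap k Ω c) = algebraMap k Ω (c ^ Q)) (g : k[X])
    (hc : ∀ i, g.coeff i ^ Q = g.coeff i) (x : Ω) : ρ (aeval x g) = aeval (ρ x) g := by
  rw [aeval_eq_sum_range, aeval_eq_sum_range, map_sum]
  refine Finset.sum_congr rfl fun i _ => ?_
  rw [Algebra.smul_def, Algebra.smul_def, map_mul, hρ, hc, map_pow]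

theorem semi_comp {Q : ℕ} {ρ : Ω →+* Ω} (hρ : IsSemi k F Q ρ) (σ : Ω ≃ₐ[F] Ω) :
    IsSemi k F Q (ρ.comp (σ : Ω →+* Ω)) := by
  constructor
  · intro c
    rw [RingHom.comp_apply, ← hρ.1]
    congr 1
    rw [IsScalarTower.algebraMap_apply k F Ω]
    exact σ.commutes _
  · rw [RingHom.comp_apply]
    conv_rhs => rw [← hρ.2]
    congr 1
    exact σ.commutes _

theorem gal_ext (g : k[X]) [IsSplittingField F Ω (gp F g)] (hg : 0 < g.natDegree)
    (σ τ : Ω ≃ₐ[F] Ω) (h : ∀ x, aeval x g = tv k F Ω → σ x = τ x) : σ = τ := by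
  have h1 := IsSplittingField.adjoin_rootSet Ω (gp F g)
  have h2 : (σ : Ω →ₐ[F] Ω) = (τ : Ω →ₐ[F] Ω) := by
    refine AlgHom.ext_of_adjoin_eq_top h1 ?_
    intro x hx
    refine h x ?_
    rw [mem_rootSet_of_ne (gp_ne_zero g hg), aeval_gp, sub_eq_zero] at hx
    exact hx
  ext x
  exact congrArg (fun f : Ω →ₐ[F] Ω => f x) h2

/-- Values at elements of `k(u)` are determined by the value at `u`. -/
theorem lemJ (B : Subalgebra k Ω) (u : B)
    (hu : Function.Injective (aeval (u : Ω) : k[X] →ₐ[k] Ω)) (ω ω₁ : B →ₐ[k] k)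
    (huω : ω u = ω₁ u) (b : B) (hb : (b : Ω) ∈ IntermediateField.adjoin k {(u : Ω)}) :
    ω b = ω₁ b := by
  classical
  rw [IntermediateField.mem_adjoin_simple_iff] at hb
  obtain ⟨P, R, hPR⟩ := hb
  by_cases hR : R = 0
  · have : b = 0 := by
      ext; rw [hPR, hR]; simp
    rw [this, map_zero, map_zero]
  obtain ⟨P', hP'⟩ := EuclideanDomain.gcd_dvd_left P R
  obtain ⟨R', hR'⟩ := EuclideanDomain.gcd_dvd_right P R
  set d := EuclideanDomain.gcd P R with hd
  have hd0 : d ≠ 0 := by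
    intro h0; rw [h0, zero_mul] at hR'; exact hR hR'
  have hR'0 : R' ≠ 0 := by
    rintro rfl; rw [mul_zero] at hR'; exact hR hR'
  have hcop : IsCoprime P' R' := by
    have h1 := EuclideanDomain.gcd_eq_gcd_ab P R
    rw [← hd] at h1
    refine ⟨EuclideanDomain.gcdA P R, EuclideanDomain.gcdB P R, ?_⟩
    apply mul_left_cancel₀ hd0
    rw [mul_one]
    linear_combination -h1 - EuclideanDomain.gcdA P R * hP' - EuclideanDomain.gcdB P R * hR'
  have hne : ∀ Z : k[X], Z ≠ 0 → aeval (u : Ω) Z ≠ 0 := fun Z hZ h =>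
    hZ (hu (h.trans (map_zero _).symm))
  have hrel : b * aeval u R' = aeval u P' := by
    apply Subtype.ext
    have e1 : ∀ Z : k[X], ((aeval u Z : B) : Ω) = aeval (u : Ω) Z := fun Z => by
      rw [← Subalgebra.coe_val, ← aeval_algHom_apply]
    rw [MulMemClass.coe_mul, e1, e1, hPR]
    have ha := hne d hd0
    have hb := hne R' hR'0
    rw [hP', hR', map_mul, map_mul]
    field_simp
  have hval : ∀ ν : B →ₐ[k] k, ν b * R'.eval (ν u) = P'.eval (ν u) := by
    intro ν
    have := congrArg ν hrel
    rw [map_mul, ← aeval_algHom_apply, ← aeval_algHom_apply] at this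
    simpa using this
  have h1 := hval ω
  have h2 := hval ω₁
  rw [← huω] at h2
  have hne : R'.eval (ω u) ≠ 0 := by
    intro h0
    rw [h0, mul_zero] at h1
    obtain ⟨α, β, hαβ⟩ := hcop
    have := congrArg (eval (ω u)) hαβ
    simp [h0, ← h1] at this
  exact mul_right_cancel₀ hne (h1.trans h2.symm)

theorem mem_adjoin_tv (a : F) : algebraMap F Ω a ∈ IntermediateField.adjoin k {tv k F Ω} := by
  obtain ⟨A, B, -, hadiv⟩ := IsFractionRing.div_surjective (A := k[X]) a
  rw [IntermediateField.mem_adjoin_simple_iff]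
  exact ⟨A, B, by rw [← hadiv, map_div₀, aeval_tv, aeval_tv]⟩

end Gal

open Polynomial

set_option linter.unusedSectionVars false

section Hom
/-- Homogenization of `g`. -/
noncomputable def Hg {k A : Type*} [Field k] [CommRing A] [Algebra k A] (g : k[X]) (w u : A) : A :=
  ∑ m ∈ Finset.range (g.natDegree + 1), algebraMap k A (g.coeff m) * w ^ m * u ^ (g.natDegree - m)

theorem Hg_map {k A B : Type*} [Field k] [CommRing A] [Algebra k A] [CommRing B] [Algebra k B]
    (φ : A →ₐ[k] B) (g : k[X]) (w u : A) : φ (Hg g w u) = Hg g (φ w) (φ u) := by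
  simp [Hg, map_sum]

theorem Hg_zero {k A : Type*} [Field k] [CommRing A] [Algebra k A] (g : k[X]) (w : A) :
    Hg g w 0 = algebraMap k A g.leadingCoeff * w ^ g.natDegree := by
  rw [Hg, Finset.sum_range_succ, Finset.sum_eq_zero]
  · simp
  · intro m hm
    rw [Finset.mem_range] at hm
    rw [zero_pow (by omega), mul_zero]

theorem Hg_eq {k Ω : Type*} [Field k] [Field Ω] [Algebra k Ω] (g : k[X]) (w x : Ω) (hx : x ≠ 0) :
    Hg g w x⁻¹ = aeval (w * x) g * (x⁻¹) ^ g.natDegree := by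
  rw [Hg, aeval_eq_sum_range, Finset.sum_mul]
  refine Finset.sum_congr rfl fun m hm => ?_
  rw [Finset.mem_range] at hm
  have : g.natDegree = m + (g.natDegree - m) := by omega
  rw [Algebra.smul_def]
  conv_rhs => rw [this, pow_add, mul_pow]
  have h2 : x ^ m * x⁻¹ ^ m = 1 := by rw [← mul_pow, mul_inv_cancel₀ hx, one_pow]
  linear_combination (-(algebraMap k Ω (g.coeff m) * w ^ m * x⁻¹ ^ (g.natDegree - m))) * h2

end Hom

theorem lemFrob {k Ω : Type*} [Field k] [IsAlgClosed k] [Field Ω] [Algebra k Ω] (p : ℕ)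
    [Fact p.Prime] [CharP k p] (B : Subalgebra k Ω) (s : ℕ) (ρ : Ω →+* Ω)
    (hρ : ∀ c : k, ρ (algebraMap k Ω c) = algebraMap k Ω (c ^ (p ^ s)))
    (hB : ∀ b ∈ B, ρ b ∈ B) (φ : B →ₐ[k] k) :
    ∃ ω₁ : B →ₐ[k] k, ∀ b : B, ω₁ b ^ (p ^ s) = φ ⟨ρ b, hB b b.2⟩ := by
  let ρB : B →+* B :=
    { toFun := fun b => ⟨ρ b, hB b b.2⟩
      map_one' := by ext; simp
      map_mul' := by intro a b; ext; simp
      map_zero' := by ext; simp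
      map_add' := by intro a b; ext; simp }
  let E := iterateFrobeniusEquiv k p s
  have hE : ∀ a, (E.symm a) ^ (p ^ s) = a := fun a => by
    have := E.apply_symm_apply a
    rwa [iterateFrobeniusEquiv_apply, iterateFrobenius_def] at this
  refine ⟨AlgHom.mk ((E.symm : k →+* k).comp ((φ : B →+* k).comp ρB)) ?_, ?_⟩
  · intro c
    change E.symm (φ (ρB (algebraMap k B c))) = c
    have : ρB (algebraMap k B c) = algebraMap k B (c ^ (p ^ s)) := by
      ext; exact hρ c
    rw [this, φ.commutes]
    apply E.injective
    rw [E.apply_symm_apply, iterateFrobeniusEquiv_apply, iterateFrobenius_def]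
    rfl
  · intro b
    exact hE _

theorem exists_intclos {k Ω : Type*} [Field k] [Field Ω] [Algebra k Ω] (u : Ω) :
    ∃ B : Subalgebra k Ω, (∀ b, b ∈ B ↔ ((aeval u : k[X] →ₐ[k] Ω) : k[X] →+* Ω).IsIntegralElem b) ∧
      ∀ b : Ω, IsIntegral B b → b ∈ B := by
  letI : Algebra k[X] Ω := ((aeval u : k[X] →ₐ[k] Ω) : k[X] →+* Ω).toAlgebra
  haveI : IsScalarTower k k[X] Ω := IsScalarTower.of_algebraMap_eq (fun c => by
    change _ = aeval u (algebraMap k k[X] c); simp)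
  refine ⟨(integralClosure k[X] Ω).restrictScalars k, fun b => Iff.rfl, fun b hb => ?_⟩
  have hb' : IsIntegral (integralClosure k[X] Ω) b := hb
  exact isIntegral_trans (R := k[X]) (A := integralClosure k[X] Ω) b hb'

theorem intclos_stable {k Ω : Type*} [Field k] [Field Ω] [Algebra k Ω] (u : Ω)
    (ρ : Ω →+* Ω) (f : k →+* k) (hf : ∀ c, ρ (algebraMap k Ω c) = algebraMap k Ω (f c))
    (hu : ρ u = u) (b : Ω) (hb : ((aeval u : k[X] →ₐ[k] Ω) : k[X] →+* Ω).IsIntegralElem b) :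
    ((aeval u : k[X] →ₐ[k] Ω) : k[X] →+* Ω).IsIntegralElem (ρ b) := by
  obtain ⟨P, hP, hPb⟩ := hb
  refine ⟨P.map (mapRingHom f), hP.map _, ?_⟩
  rw [eval₂_map]
  have : ((aeval u : k[X] →ₐ[k] Ω) : k[X] →+* Ω).comp (mapRingHom f) =
      ρ.comp ((aeval u : k[X] →ₐ[k] Ω) : k[X] →+* Ω) := by
    apply Polynomial.ringHom_ext
    · intro c; simp [hf]
    · simp [hu]
  rw [this, ← hom_eval₂, hPb, map_zero]

section Inf
variable {k F Ω : Type*} [Field k] [IsAlgClosed k] [Field F] [Algebra k[X] F]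
  [IsFractionRing k[X] F] [Algebra k F] [IsScalarTower k k[X] F] [Field Ω] [Algebra F Ω]
  [Algebra k Ω] [IsScalarTower k F Ω]

theorem root_ne_zero (g : k[X]) (x : Ω) (hx : aeval x g = tv k F Ω) : x ≠ 0 := by
  intro h0
  have h1 := root_transc g x hx
  have : aeval x (X : k[X]) = aeval x (0 : k[X]) := by simp [h0]
  exact X_ne_zero (h1 this)

theorem tv_ne_zero : tv k F Ω ≠ 0 := by
  have := tv_ne_const (F := F) (Ω := Ω) (0 : k)
  simpa using this

theorem inv_transc (x : Ω) (hx : Function.Injective (aeval x : k[X] →ₐ[k] Ω)) :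
    Function.Injective (aeval x⁻¹ : k[X] →ₐ[k] Ω) := by
  rw [← transcendental_iff_injective] at *
  intro h
  apply hx
  have := h.inv
  rwa [inv_inv] at this

theorem inv_root_integral (g : k[X]) (hg : 0 < g.natDegree) (hg0 : g.coeff 0 = 0) (x : Ω)
    (hx : aeval x g = tv k F Ω) :
    ((aeval (tv k F Ω)⁻¹ : k[X] →ₐ[k] Ω) : k[X] →+* Ω).IsIntegralElem x⁻¹ := by
  have hx0 := root_ne_zero g x hx
  have hT0 : tv k F Ω ≠ 0 := tv_ne_zero
  have h1 := Hg_eq g 1 x hx0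
  rw [one_mul, hx] at h1
  let q : k[X][X] := ∑ m ∈ Finset.range g.natDegree,
    C (X * C (g.coeff (m + 1))) * X ^ (g.natDegree - (m + 1))
  have hq : q.degree < g.natDegree := by
    refine lt_of_le_of_lt (degree_sum_le _ _) ?_
    rw [Finset.sup_lt_iff (WithBot.bot_lt_coe _)]
    intro m hm
    rw [Finset.mem_range] at hm
    refine lt_of_le_of_lt (degree_C_mul_X_pow_le _ _) ?_
    norm_cast
    omega
  refine ⟨X ^ g.natDegree - q, ?_, ?_⟩
  · exact monic_X_pow_sub hq
  · have h2 : eval₂ ((aeval (tv k F Ω)⁻¹ : k[X] →ₐ[k] Ω) : k[X] →+* Ω) x⁻¹ q =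
        (tv k F Ω)⁻¹ * Hg g 1 x⁻¹ := by
      rw [Hg, Finset.sum_range_succ', hg0]
      simp only [q, eval₂_finsetSum, map_zero, zero_mul, add_zero, Finset.mul_sum]
      refine Finset.sum_congr rfl fun m _ => ?_
      simp
      ring
    rw [eval₂_sub, h2, h1]
    simp [hT0]

end Inf

open Polynomial

set_option linter.unusedSectionVars false

section Inf2
variable {k F Ω : Type*} [Field k] [IsAlgClosed k] [Field F] [Algebra k[X] F]
  [IsFractionRing k[X] F] [Algebra k F] [IsScalarTower k k[X] F] [Field Ω] [Algebra F Ω]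
  [Algebra k Ω] [IsScalarTower k F Ω]

theorem fixed_mem_adjoin [FiniteDimensional F Ω] [IsGalois F Ω] (g : k[X]) (x : Ω)
    (hx : aeval x g = tv k F Ω) (b : Ω)
    (hb : ∀ σ ∈ (IntermediateField.adjoin F {x}).fixingSubgroup, σ b = b) :
    b ∈ IntermediateField.adjoin k {x⁻¹} := by
  have hxm : x ∈ IntermediateField.adjoin k {x⁻¹} := by
    have := IntermediateField.mem_adjoin_simple_self k x⁻¹
    have h2 := inv_mem this
    rwa [inv_inv] at h2
  have hTm : tv k F Ω ∈ IntermediateField.adjoin k {x⁻¹} := by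
    rw [← hx]
    have : aeval x g = ((aeval (⟨x, hxm⟩ : IntermediateField.adjoin k {x⁻¹}) g :
      IntermediateField.adjoin k {x⁻¹}) : Ω) := by
      rw [← IntermediateField.coe_val, ← aeval_algHom_apply]
      rfl
    rw [this]
    exact Subtype.property _
  have hF : ∀ a : F, algebraMap F Ω a ∈ IntermediateField.adjoin k {x⁻¹} := by
    intro a
    have h1 := mem_adjoin_tv (k := k) (Ω := Ω) a
    have h2 : IntermediateField.adjoin k {tv k F Ω} ≤ IntermediateField.adjoin k {x⁻¹} := by
      rw [IntermediateField.adjoin_simple_le_iff]; exact hTm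
    exact h2 h1
  have hFx : ∀ r : F[X], aeval x r ∈ IntermediateField.adjoin k {x⁻¹} := by
    intro r
    rw [aeval_eq_sum_range]
    refine sum_mem fun i _ => ?_
    rw [Algebra.smul_def]
    exact mul_mem (hF _) (pow_mem hxm _)
  have hbF : b ∈ IntermediateField.adjoin F {x} := by
    rw [← IsGalois.fixedField_fixingSubgroup (IntermediateField.adjoin F {x})]
    rw [IntermediateField.mem_fixedField_iff]
    exact hb
  rw [IntermediateField.mem_adjoin_simple_iff] at hbF
  obtain ⟨r, s, hrs⟩ := hbF
  rw [hrs]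
  exact div_mem (hFx r) (hFx s)

theorem inf_arg (p : ℕ) [hp : Fact p.Prime] [CharP k p] (hodd : Odd p) (g : k[X])
    (hg : 0 < g.natDegree) (hg0 : g.coeff 0 = 0) (heven : Even g.natDegree)
    [FiniteDimensional F Ω] [IsGalois F Ω]
    (S : Finset Ω) (hS : ∀ x, x ∈ S ↔ aeval x g = tv k F Ω) (hScard : S.card = g.natDegree)
    (hprod : g.map (algebraMap k Ω) - C (tv k F Ω) =
        C (algebraMap k Ω g.leadingCoeff) * ∏ x ∈ S, (X - C x))
    (s : ℕ) (hc : ∀ i, g.coeff i ^ (p ^ s) = g.coeff i)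
    (ρ : Ω →+* Ω) (hρ : IsSemi k F (p ^ s) ρ) :
    ∃ σ : Ω ≃ₐ[F] Ω, ∀ x ∈ S, ρ (σ x) ≠ x := by
  classical
  set T := tv k F Ω with hTdef
  have hT0 : T ≠ 0 := tv_ne_zero
  have hlc : g.leadingCoeff ≠ 0 := by
    intro h0
    rw [leadingCoeff_eq_zero] at h0
    rw [h0, natDegree_zero] at hg
    omega
  obtain ⟨B, hB, hBint⟩ := exists_intclos (k := k) T⁻¹
  have hTB : T⁻¹ ∈ B := by
    rw [hB]
    exact ⟨X - C X, monic_X_sub_C _, by simp⟩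
  -- stability
  have hBσ : ∀ σ : Ω ≃ₐ[F] Ω, ∀ b ∈ B, σ b ∈ B := by
    intro σ b hb
    rw [hB] at *
    refine intclos_stable T⁻¹ (σ : Ω →+* Ω) (RingHom.id k) ?_ ?_ b hb
    · intro c
      change σ (algebraMap k Ω c) = algebraMap k Ω c
      rw [IsScalarTower.algebraMap_apply k F Ω]
      exact σ.commutes _
    · change σ T⁻¹ = T⁻¹
      rw [map_inv₀]
      congr 1
      exact σ.commutes _
  have hBρ : ∀ b ∈ B, ρ b ∈ B := by
    intro b hb
    rw [hB] at *
    refine intclos_stable T⁻¹ ρ (iterateFrobenius k p s) ?_ ?_ b hb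
    · intro c
      rw [hρ.1, iterateFrobenius_def]
    · rw [map_inv₀, hρ.2]
  have hx0 : ∀ x ∈ S, x ≠ 0 := fun x hx => root_ne_zero g x ((hS x).1 hx)
  have hinvB : ∀ x ∈ S, x⁻¹ ∈ B := fun x hx => by
    rw [hB]; exact inv_root_integral g hg hg0 x ((hS x).1 hx)
  -- homogeneous relation
  have hrel0 : ∀ y ∈ S, Hg g 1 y⁻¹ = T * y⁻¹ ^ g.natDegree := by
    intro y hy
    rw [Hg_eq g 1 y (hx0 y hy), one_mul, (hS y).1 hy]
  have hrel : ∀ x ∈ S, ∀ y ∈ S, Hg g (x / y) y⁻¹ = Hg g 1 y⁻¹ := by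
    intro x hx y hy
    rw [hrel0 y hy, Hg_eq g _ y (hx0 y hy), div_mul_cancel₀ _ (hx0 y hy), (hS x).1 hx]
  have hdivB : ∀ x ∈ S, ∀ y ∈ S, x / y ∈ B := by
    intro x hx y hy
    apply hBint
    let u : B := ⟨y⁻¹, hinvB y hy⟩
    let q : B[X] := (∑ m ∈ Finset.range g.natDegree,
      C (algebraMap k B (g.leadingCoeff⁻¹ * g.coeff m) * u ^ (g.natDegree - m)) * X ^ m)
      - C (algebraMap k B g.leadingCoeff⁻¹ * Hg g 1 u)
    have hq : q.degree < g.natDegree := by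
      refine lt_of_le_of_lt (degree_sub_le _ _) ?_
      rw [max_lt_iff]
      constructor
      · refine lt_of_le_of_lt (degree_sum_le _ _) ?_
        rw [Finset.sup_lt_iff (WithBot.bot_lt_coe _)]
        intro m hm
        rw [Finset.mem_range] at hm
        refine lt_of_le_of_lt (degree_C_mul_X_pow_le _ _) ?_
        norm_cast
      · refine lt_of_le_of_lt degree_C_le ?_
        norm_cast
    refine ⟨X ^ g.natDegree + q, monic_X_pow_add hq, ?_⟩
    have h1 := hrel x hx y hy
    have h2 : algebraMap B Ω (Hg g 1 u) = Hg g 1 y⁻¹ := by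
      have := Hg_map B.val g 1 u
      rw [map_one] at this
      exact this
    have hlc' : algebraMap k Ω g.leadingCoeff ≠ 0 := by simpa using hlc
    have h3 : eval₂ (algebraMap B Ω) (x / y) (X ^ g.natDegree + q) =
        algebraMap k Ω g.leadingCoeff⁻¹ * (Hg g (x / y) y⁻¹ - Hg g 1 y⁻¹) := by
      conv_rhs => rw [Hg, Finset.sum_range_succ]
      rw [Hg] at h2
      have hu : algebraMap B Ω u = y⁻¹ := rfl
      have hkB : ∀ c : k, algebraMap B Ω (algebraMap k B c) = algebraMap k Ω c := fun c => rfl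
      simp only [q, eval₂_add, eval₂_sub, eval₂_finsetSum, eval₂_mul, eval₂_C, eval₂_X_pow]
      simp only [map_mul, map_pow, hu, hkB]
      rw [show algebraMap B Ω (Hg g 1 u) = Hg g 1 y⁻¹ by
        have := Hg_map B.val g 1 u
        rw [map_one] at this
        exact this]
      simp only [Nat.sub_self, pow_zero, mul_one, coeff_natDegree, mul_sub, mul_add,
        Finset.mul_sum, map_inv₀]
      have h5 : (algebraMap k Ω g.leadingCoeff)⁻¹ *
        (algebraMap k Ω g.leadingCoeff * (x / y) ^ g.natDegree) = (x / y) ^ g.natDegree := by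
        field_simp
      rw [h5]
      have h6 : ∑ m ∈ Finset.range g.natDegree, (algebraMap k Ω g.leadingCoeff)⁻¹ *
          algebraMap k Ω (g.coeff m) * y⁻¹ ^ (g.natDegree - m) * (x / y) ^ m =
        ∑ m ∈ Finset.range g.natDegree, (algebraMap k Ω g.leadingCoeff)⁻¹ *
          (algebraMap k Ω (g.coeff m) * (x / y) ^ m * y⁻¹ ^ (g.natDegree - m)) :=
        Finset.sum_congr rfl fun m _ => by ring
      rw [h6]; ring
    rw [h3, h1, sub_self, mul_zero]
  -- the point at infinity
  have hcoe : ∀ (u : B) (Z : k[X]), ((aeval u Z : B) : Ω) = aeval (u : Ω) Z := fun u Z => by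
    rw [← Subalgebra.coe_val, ← aeval_algHom_apply]
  obtain ⟨φ, hφ⟩ := lemE (k := k) (⟨T⁻¹, hTB⟩ : B) (by
      intro P Q hPQ
      have h1 := congrArg (Subtype.val) hPQ
      rw [hcoe, hcoe] at h1
      exact inv_transc T (aeval_tv_inj (F := F) (Ω := Ω)) h1) (by
      intro b
      obtain ⟨f, hf, hfb⟩ := (hB b).1 b.2
      refine ⟨f, hf, ?_⟩
      apply Subtype.ext
      rw [← Subalgebra.coe_val, ← AlgHom.coe_toRingHom, hom_eval₂]
      have h8 : (B.val : B →+* Ω).comp ((aeval (⟨T⁻¹, hTB⟩ : B) : k[X] →ₐ[k] B) : k[X] →+* B) =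
        ((aeval T⁻¹ : k[X] →ₐ[k] Ω) : k[X] →+* Ω) := by
        ext P
        · simp
        · simp
      exact (congrArg (fun ψ => eval₂ ψ (b : Ω) f) h8).trans hfb) 0
  have hφinv : ∀ x (hx : x ∈ S), φ ⟨x⁻¹, hinvB x hx⟩ = 0 := by
    intro x hx
    let u : B := ⟨x⁻¹, hinvB x hx⟩
    have h1 : u ^ g.natDegree = ⟨T⁻¹, hTB⟩ * Hg g 1 u := by
      apply Subtype.ext
      have h2 : ((Hg g 1 u : B) : Ω) = Hg g 1 x⁻¹ := by
        have := Hg_map B.val g 1 u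
        rw [map_one] at this
        exact this
      rw [MulMemClass.coe_mul, h2, hrel0 x hx]
      simp only [SubmonoidClass.coe_pow, u]
      field_simp
    have h3 := congrArg φ h1
    rw [map_pow, map_mul, hφ, zero_mul] at h3
    exact pow_eq_zero_iff (by omega) |>.1 h3
  obtain ⟨x1, hx1⟩ : S.Nonempty := by
    rw [← Finset.card_pos, hScard]; exact hg
  let ζ : ∀ x ∈ S, ∀ y ∈ S, k := fun x hx y hy => φ ⟨x / y, hdivB x hx y hy⟩
  have hζn : ∀ x (hx : x ∈ S), ζ x hx x1 hx1 ^ g.natDegree = 1 := by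
    intro x hx
    let u : B := ⟨x1⁻¹, hinvB x1 hx1⟩
    let w : B := ⟨x / x1, hdivB x hx x1 hx1⟩
    have h1 : Hg g w u = Hg g 1 u := by
      apply Subtype.ext
      have h2 := Hg_map B.val g 1 u
      have h3 := Hg_map B.val g w u
      rw [map_one] at h2
      exact h3.trans ((hrel x hx x1 hx1).trans h2.symm)
    have h2 := congrArg φ h1
    rw [Hg_map, Hg_map, map_one, hφinv x1 hx1, Hg_zero, Hg_zero, one_pow] at h2
    exact mul_left_cancel₀ (by simpa using hlc) h2
  have hζsurj : ∀ θ : k, θ ^ g.natDegree = 1 → ∃ x, ∃ hx : x ∈ S, ζ x hx x1 hx1 = θ := by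
    intro θ hθ
    let u : B := ⟨x1⁻¹, hinvB x1 hx1⟩
    have h1 : Hg g (algebraMap k B θ) u - Hg g 1 u = algebraMap k B g.leadingCoeff *
        ∏ x ∈ S.attach, (algebraMap k B θ - ⟨x / x1, hdivB x x.2 x1 hx1⟩) := by
      apply Subtype.ext
      have h2 := Hg_map B.val g 1 u
      have h3 := Hg_map B.val g (algebraMap k B θ) u
      rw [map_one] at h2
      have h2' : ((Hg g 1 u : B) : Ω) = Hg g 1 x1⁻¹ := h2
      have h3' : ((Hg g (algebraMap k B θ) u : B) : Ω) = Hg g (algebraMap k Ω θ) x1⁻¹ := h3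
      have h4 := congrArg (eval (algebraMap k Ω θ * x1)) hprod
      rw [eval_sub, eval_C, eval_map_algebraMap, eval_mul, eval_C, eval_prod] at h4
      rw [AddSubgroupClass.coe_sub, h2', h3', hrel0 x1 hx1, Hg_eq g _ x1 (hx0 x1 hx1), ← sub_mul,
        h4, mul_assoc, MulMemClass.coe_mul]
      congr 1
      rw [← hScard, ← Finset.prod_const, ← Finset.prod_mul_distrib, ← Finset.prod_attach]
      simp only [SubmonoidClass.coe_finsetProd]
      refine Finset.prod_congr rfl fun x _ => ?_
      have := hx0 x1 hx1
      rw [eval_sub, eval_X, eval_C, AddSubgroupClass.coe_sub]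
      change _ = algebraMap k Ω θ - x / x1
      field_simp
    have h2 := congrArg φ h1
    rw [map_sub, Hg_map, Hg_map, map_one, hφinv x1 hx1, Hg_zero, Hg_zero, one_pow, φ.commutes,
      map_mul, map_prod] at h2
    have h3 : (algebraMap k k θ) ^ g.natDegree = 1 := hθ
    rw [h3, sub_self, φ.commutes] at h2
    have h4 := (mul_eq_zero.1 h2.symm).resolve_left (by simpa using hlc)
    obtain ⟨x, -, hx⟩ := Finset.prod_eq_zero_iff.1 h4
    rw [map_sub, φ.commutes, sub_eq_zero] at hx
    exact ⟨x, x.2, hx.symm⟩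
  obtain ⟨m, hm⟩ := heven
  have hm0 : 0 < m := by omega
  obtain ⟨θ, hθ⟩ := IsAlgClosed.exists_pow_nat_eq (-1 : k) hm0
  obtain ⟨xj, hxj, hζj⟩ := hζsurj θ (by rw [hm, pow_add, hθ]; ring)
  -- ρ permutes the roots
  have hρS : ∀ x ∈ S, ρ x ∈ S := by
    intro x hx
    rw [hS] at *
    rw [← semi_aeval _ ρ hρ.1 g hc, hx, hρ.2]
  have hρsurj : ∃ xl ∈ S, ρ xl = xj :=
    Finset.surj_on_of_inj_on_of_card_le (s := S) (t := S) (fun a _ => ρ a) hρS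
      (fun a b _ _ h => ρ.injective h) le_rfl xj hxj |>.imp (fun a h => ⟨h.1, h.2.symm⟩)
  obtain ⟨xl, hxl, hxlj⟩ := hρsurj
  obtain ⟨g1, hg1⟩ := gal_trans g x1 xl ((hS x1).1 hx1) ((hS xl).1 hxl)
  have hsemi1 := semi_comp hρ g1
  obtain ⟨ω₁, hω₁⟩ := lemFrob p B s _ hsemi1.1 (fun b hb => hBρ _ (hBσ g1 b hb)) φ
  let H := (IntermediateField.adjoin F {x1}).fixingSubgroup
  have hp0 : p ^ s ≠ 0 := pow_ne_zero _ hp.out.ne_zero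
  obtain ⟨h, hh⟩ := lemT (H := H) B (by
      intro h c
      rw [IsScalarTower.algebraMap_apply k F Ω]
      exact (h : Ω ≃ₐ[F] Ω).commutes _) (fun h b hb => hBσ (h : Ω ≃ₐ[F] Ω) b hb) φ ω₁ (by
      intro b hb
      refine lemJ B ⟨x1⁻¹, hinvB x1 hx1⟩ (inv_transc x1 (root_transc g x1 ((hS x1).1 hx1))) φ ω₁
        ?_ b ?_
      · rw [hφinv x1 hx1]
        symm
        have h1 := hω₁ ⟨x1⁻¹, hinvB x1 hx1⟩
        have h2 : (ρ.comp (g1 : Ω →+* Ω)) x1⁻¹ = xj⁻¹ := by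
          rw [map_inv₀]
          congr 1
          rw [RingHom.comp_apply, ← hxlj, ← hg1]
          rfl
        simp only [h2] at h1
        rw [hφinv xj hxj] at h1
        exact pow_eq_zero_iff hp0 |>.1 h1
      · refine fixed_mem_adjoin g x1 ((hS x1).1 hx1) b ?_
        intro σ hσ
        exact hb ⟨σ, hσ⟩)
  have hkey : ∀ b : B, φ b ^ (p ^ s) =
      φ ⟨ρ (g1 ((h : Ω ≃ₐ[F] Ω) b)), hBρ _ (hBσ g1 _ (hBσ (h : Ω ≃ₐ[F] Ω) b b.2))⟩ := by
    intro b
    rw [hh b, hω₁]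
    rfl
  have hhx1 : (h : Ω ≃ₐ[F] Ω) x1 = x1 := by
    have := h.2
    exact (IntermediateField.mem_fixingSubgroup_iff _ _).1 this x1
      (IntermediateField.mem_adjoin_simple_self F x1)
  refine ⟨g1 * (h : Ω ≃ₐ[F] Ω), fun x hx hfix => ?_⟩
  have hfix' : ρ (g1 ((h : Ω ≃ₐ[F] Ω) x)) = x := hfix
  have h1 := hkey ⟨x / x1, hdivB x hx x1 hx1⟩
  have h2 : ρ (g1 ((h : Ω ≃ₐ[F] Ω) (x / x1))) = x / xj := by
    rw [map_div₀, map_div₀, map_div₀, hfix', hhx1, hg1, hxlj]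
  simp only [h2] at h1
  have h3 : ζ x hx x1 hx1 = ζ x hx xj hxj * ζ xj hxj x1 hx1 := by
    simp only [ζ]
    rw [← map_mul]
    congr 1
    apply Subtype.ext
    have := hx0 xj hxj
    have := hx0 x1 hx1
    change x / x1 = x / xj * (xj / x1)
    field_simp
  have h1' : ζ x hx x1 hx1 ^ (p ^ s) = ζ x hx xj hxj := h1
  rw [hζj, ← h1'] at h3
  have hz := hζn x hx
  set z := ζ x hx x1 hx1
  rw [hm, pow_add] at hz
  have h4 : z ^ m = (z ^ m) ^ (p ^ s) * (-1) := by
    conv_lhs => rw [h3]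
    rw [mul_pow, hθ, ← pow_mul, ← pow_mul, mul_comm m]
  obtain ⟨r, hr⟩ := hodd.pow (n := s)
  have h5 : (z ^ m) ^ (p ^ s) = z ^ m := by
    rw [hr, pow_succ, pow_mul, pow_two, hz, one_pow, one_mul]
  rw [h5] at h4
  have h6 : (2 : k) * z ^ m = 0 := by linear_combination h4
  have h7 : z ^ m ≠ 0 := by
    intro h0; rw [h0] at hz; simp at hz
  have h8 : (2 : k) = 0 := (mul_eq_zero.1 h6).resolve_right h7
  have h9 : p ∣ 2 := by
    rw [← CharP.cast_eq_zero_iff k p]; exact_mod_cast h8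
  have h10 := Nat.le_of_dvd (by norm_num) h9
  have h11 := hp.out.two_le
  have : p = 2 := by omega
  rw [this] at hodd
  exact absurd hodd (by decide)

end Inf2

open Polynomial

set_option linter.unusedSectionVars false

section BM
variable {k F Ω : Type*} [Field k] [IsAlgClosed k] [Field F] [Algebra k[X] F]
  [IsFractionRing k[X] F] [Algebra k F] [IsScalarTower k k[X] F] [Field Ω] [Algebra F Ω]
  [Algebra k Ω] [IsScalarTower k F Ω]

theorem coe_aeval_sub (M : Subalgebra k Ω) (u : M) (Z : k[X]) :
    ((aeval u Z : M) : Ω) = aeval (u : Ω) Z := by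
  rw [← Subalgebra.coe_val, ← aeval_algHom_apply]

theorem tv_mem (g : k[X]) (S : Finset Ω) (x : Ω) (hx : x ∈ S) (hxT : aeval x g = tv k F Ω) :
    tv k F Ω ∈ Algebra.adjoin k (S : Set Ω) := by
  rw [← hxT]
  have := coe_aeval_sub (Algebra.adjoin k (S : Set Ω))
    ⟨x, Algebra.subset_adjoin (Finset.mem_coe.2 hx)⟩ g
  simp only at this
  rw [← this]
  exact Subtype.property _

theorem adjoin_integral (g : k[X]) (hg : 0 < g.natDegree) (S : Finset Ω)
    (hS : ∀ x, x ∈ S ↔ aeval x g = tv k F Ω)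
    (hT : tv k F Ω ∈ Algebra.adjoin k (S : Set Ω)) (x : Algebra.adjoin k (S : Set Ω))
    (hx : (x : Ω) ∈ S) :
    ((aeval (⟨_, hT⟩ : Algebra.adjoin k (S : Set Ω)) : k[X] →ₐ[k] _) :
      k[X] →+* Algebra.adjoin k (S : Set Ω)).IsIntegralElem x := by
  have hlc : g.leadingCoeff ≠ 0 := by
    intro h0
    rw [leadingCoeff_eq_zero] at h0
    rw [h0, natDegree_zero] at hg
    omega
  let q : k[X][X] := C (C g.leadingCoeff⁻¹) * (g.map C - C X)
  refine ⟨q, ?_, ?_⟩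
  · rw [Monic, leadingCoeff_mul, leadingCoeff_C, leadingCoeff_sub_of_degree_lt, leadingCoeff_map,
      ← C_mul, inv_mul_cancel₀ hlc, C_1]
    refine lt_of_le_of_lt degree_C_le ?_
    rw [degree_map_eq_of_injective C_injective]
    exact natDegree_pos_iff_degree_pos.1 hg
  · simp only [q, eval₂_mul, eval₂_sub, eval₂_C, eval₂_map]
    have h1 : (((aeval (⟨_, hT⟩ : Algebra.adjoin k (S : Set Ω)) : k[X] →ₐ[k] _) :
      k[X] →+* Algebra.adjoin k (S : Set Ω)).comp C) =
        algebraMap k (Algebra.adjoin k (S : Set Ω)) := by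
      ext c; simp
    rw [h1, ← aeval_def]
    have h2 : aeval x g = (⟨_, hT⟩ : Algebra.adjoin k (S : Set Ω)) := by
      apply Subtype.ext
      rw [coe_aeval_sub]
      exact (hS _).1 hx
    rw [h2]
    simp

theorem adjoin_stable (S : Finset Ω) (ρ : Ω →+* Ω) (Q : ℕ)
    (hρ : ∀ c : k, ρ (algebraMap k Ω c) = algebraMap k Ω (c ^ Q))
    (hρS : ∀ x ∈ S, ρ x ∈ S) : ∀ x ∈ Algebra.adjoin k (S : Set Ω),
      ρ x ∈ Algebra.adjoin k (S : Set Ω) := by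
  intro x hx
  induction hx using Algebra.adjoin_induction with
  | mem x hx => exact Algebra.subset_adjoin (hρS x hx)
  | algebraMap c => rw [hρ]; exact Subalgebra.algebraMap_mem _ _
  | add x y _ _ hx hy => rw [map_add]; exact add_mem hx hy
  | mul x y _ _ hx hy => rw [map_mul]; exact mul_mem hx hy

theorem bomM (p : ℕ) [hp : Fact p.Prime] [CharP k p] (g : k[X])
    (hg : 0 < g.natDegree) [FiniteDimensional F Ω] [IsGalois F Ω] (S : Finset Ω)
    (hS : ∀ x, x ∈ S ↔ aeval x g = tv k F Ω) (hScard : S.card = g.natDegree)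
    (N : ℕ) (hN : 1 ≤ N) :
    ∃ C2 e0 : ℕ, ∀ e ≥ e0, ∀ ρ : Ω →+* Ω, IsSemi k F (p ^ e) ρ → (∀ x ∈ S, ρ x ∈ S) →
      ∀ Z : Finset (Algebra.adjoin k (S : Set Ω) →ₐ[k] k),
      (∀ ω ∈ Z, ∀ x y : Algebra.adjoin k (S : Set Ω), (y : Ω) = ρ x → ω y = ω x ^ (p ^ e)) →
      2 * N * Z.card ≤ (2 * N + 1) * p ^ e + C2 := by
  classical
  obtain ⟨x1, hx1⟩ : S.Nonempty := by
    rw [← Finset.card_pos, hScard]; exact hg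
  have hT := tv_mem g S x1 hx1 ((hS x1).1 hx1)
  have hadj := adjoin_integral g hg S hS hT
  have hstab := adjoin_stable (k := k) S
  have hpre := Algebra.adjoin_adjoin_coe_preimage (R := k) (s := (S : Set Ω))
  have hcoe := coe_aeval_sub (Algebra.adjoin k (S : Set Ω))
  have hSM : ∀ x ∈ S, x ∈ Algebra.adjoin k (S : Set Ω) := fun x hx => Algebra.subset_adjoin hx
  generalize Algebra.adjoin k (S : Set Ω) = M at *
  let T' : M := ⟨_, hT⟩
  letI : Algebra k[X] M := ((aeval T' : k[X] →ₐ[k] M) : k[X] →+* M).toAlgebra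
  have halg : ∀ P : k[X], algebraMap k[X] M P = aeval T' P := fun P => rfl
  haveI : IsScalarTower k k[X] M := IsScalarTower.of_algebraMap_eq (fun c => by
    change _ = aeval T' (algebraMap k k[X] c); simp)
  have hinj : Function.Injective (algebraMap k[X] M) := by
    intro P Q hPQ
    have h1 := congrArg (Subtype.val) hPQ
    rw [halg, halg, hcoe, hcoe] at h1
    exact aeval_tv_inj (F := F) (Ω := Ω) h1
  let S' : Set M := Subtype.val ⁻¹' (S : Set Ω)
  have hS'fin : S'.Finite := S.finite_toSet.preimage Subtype.val_injective.injOn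
  have htop : Algebra.adjoin k[X] S' = ⊤ := by
    rw [eq_top_iff]
    intro x _
    have h1 : Algebra.adjoin k S' ≤ (Algebra.adjoin k[X] S').restrictScalars k :=
      Algebra.adjoin_le Algebra.subset_adjoin
    exact h1 (by rw [hpre]; trivial)
  haveI : Module.Finite k[X] M := by
    refine ⟨?_⟩
    have := fg_adjoin_of_finite hS'fin (fun x hx => hadj x hx)
    rw [htop] at this
    exact this
  haveI : Module.IsTorsionFree k[X] M := by
    have : FaithfulSMul k[X] M := (faithfulSMul_iff_algebraMap_injective _ _).2 hinj
    infer_instance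
  haveI : Module.Free k[X] M := inferInstance
  let b := Module.finBasis k[X] M
  haveI : CharP Ω p := charP_of_injective_algebraMap (algebraMap k Ω).injective p
  haveI : CharP M p := charP_of_injective_algebraMap (algebraMap k M).injective p
  let R : Set (M →+* M) := {ρ | (∃ e : ℕ, ∀ c : k, ρ (algebraMap k M c) =
    algebraMap k M (c ^ (p ^ e))) ∧ ρ T' = T' ∧ ∀ x ∈ S', ρ x ∈ S'}
  obtain ⟨C2, e0, hmain⟩ := bombieri b p (by
      intro m β hβ
      have hβ' : LinearIndependent k (fun j => (β j : Ω)) :=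
        hβ.map' M.val.toLinearMap (LinearMap.ker_eq_bot.2 Subtype.val_injective)
      obtain ⟨e0, he0⟩ := lemL5 (F := F) p m _ hβ'
      refine ⟨e0, fun e he s hs => ?_⟩
      have h1 := congrArg (Subtype.val) hs
      have h2 := he0 e he (fun j => (s j : Ω)) (by simpa using h1)
      ext j
      exact congrFun h2 j) R (by
      rintro ρ ⟨⟨e, he⟩, hT', -⟩ P
      refine ⟨P.map (iterateFrobenius k p e), degree_map_le, ?_⟩
      have h3 : ρ.comp (algebraMap k[X] M) =
          (algebraMap k[X] M).comp (mapRingHom (iterateFrobenius k p e)) := by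
        apply Polynomial.ringHom_ext
        · intro c
          simp only [RingHom.comp_apply, halg, coe_mapRingHom, map_C, aeval_C, he,
            iterateFrobenius_def]
        · simp only [RingHom.comp_apply, halg, coe_mapRingHom, map_X, aeval_X, hT']
      exact congrArg (fun f : k[X] →+* M => f P) h3) (by
      obtain ⟨c1, hc1⟩ := BdS_mul b
      intro m
      have hm : m ∈ Algebra.adjoin k S' := by rw [hpre]; trivial
      induction hm using Algebra.adjoin_induction with
      | mem x hx =>
        obtain ⟨v, hv⟩ := BdS_exists_fin b hS'fin.toFinset id
        exact ⟨v, fun ρ hρ => hv _ (hS'fin.mem_toFinset.2 (hρ.2.2 x hx))⟩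
      | algebraMap c =>
        obtain ⟨v, hv⟩ := BdS_exists b (1 : M)
        refine ⟨v, fun ρ hρ => ?_⟩
        obtain ⟨e, he⟩ := hρ.1
        rw [he, Algebra.algebraMap_eq_smul_one]
        exact Submodule.smul_mem _ _ hv
      | add x y _ _ hx hy =>
        obtain ⟨v, hv⟩ := hx
        obtain ⟨w, hw⟩ := hy
        refine ⟨max v w, fun ρ hρ => ?_⟩
        rw [map_add]
        exact add_mem (BdS_mono b (le_max_left _ _) (hv ρ hρ))
          (BdS_mono b (le_max_right _ _) (hw ρ hρ))
      | mul x y _ _ hx hy =>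
        obtain ⟨v, hv⟩ := hx
        obtain ⟨w, hw⟩ := hy
        refine ⟨v + w + c1, fun ρ hρ => ?_⟩
        rw [map_mul]
        exact hc1 _ _ _ _ (hv ρ hρ) (hw ρ hρ)) N hN
  refine ⟨C2, e0, fun e he ρ hρ hρS Z hZ => ?_⟩
  have hρM := hstab ρ _ hρ.1 hρS
  let ρM : M →+* M :=
    { toFun := fun b => ⟨ρ b, hρM b b.2⟩
      map_one' := by ext; simp
      map_mul' := by intro a b; ext; simp
      map_zero' := by ext; simp
      map_add' := by intro a b; ext; simp }
  refine hmain e he ρM ⟨⟨e, fun c => ?_⟩, ?_, ?_⟩ Z (fun ω hω x => hZ ω hω x _ rfl)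
  · ext; exact hρ.1 c
  · ext; exact hρ.2
  · intro x hx
    exact hρS x hx

end BM

open Polynomial

set_option linter.unusedSectionVars false

section Cov
variable {k F Ω : Type*} [Field k] [IsAlgClosed k] [Field F] [Algebra k[X] F]
  [IsFractionRing k[X] F] [Algebra k F] [IsScalarTower k k[X] F] [Field Ω] [Algebra F Ω]
  [Algebra k Ω] [IsScalarTower k F Ω]

theorem adjoin_all_integral (g : k[X]) (hg : 0 < g.natDegree) (S : Finset Ω)
    (hS : ∀ x, x ∈ S ↔ aeval x g = tv k F Ω)
    (hT : tv k F Ω ∈ Algebra.adjoin k (S : Set Ω)) :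
    ((aeval (⟨_, hT⟩ : Algebra.adjoin k (S : Set Ω)) : k[X] →ₐ[k] _) :
      k[X] →+* Algebra.adjoin k (S : Set Ω)).IsIntegral := by
  have hadj := adjoin_integral g hg S hS hT
  have hpre := Algebra.adjoin_adjoin_coe_preimage (R := k) (s := (S : Set Ω))
  generalize Algebra.adjoin k (S : Set Ω) = M at *
  letI : Algebra k[X] M := ((aeval (⟨_, hT⟩ : M) : k[X] →ₐ[k] M) : k[X] →+* M).toAlgebra
  haveI : IsScalarTower k k[X] M := IsScalarTower.of_algebraMap_eq (fun c => by
    change _ = aeval _ (algebraMap k k[X] c); simp)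
  intro x
  have h1 : Algebra.adjoin k (Subtype.val ⁻¹' (S : Set Ω)) ≤
      (integralClosure k[X] M).restrictScalars k := Algebra.adjoin_le (fun y hy => hadj y hy)
  rw [hpre] at h1
  exact h1 (Algebra.mem_top (x := x))

theorem pt_inj (g : k[X]) (S : Finset Ω)
    (hS : ∀ x, x ∈ S ↔ aeval x g = tv k F Ω)
    (hprod : g.map (algebraMap k Ω) - C (tv k F Ω) =
        C (algebraMap k Ω g.leadingCoeff) * ∏ x ∈ S, (X - C x))
    (M : Subalgebra k Ω) (hSM : ∀ x ∈ S, x ∈ M) (hT : tv k F Ω ∈ M)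
    (ω : M →ₐ[k] k) (hgood : ∀ ξ, g.eval ξ = ω ⟨_, hT⟩ → (derivative g).eval ξ ≠ 0)
    (x y : Ω) (hx : x ∈ S) (hy : y ∈ S) (hxy : ω ⟨x, hSM x hx⟩ = ω ⟨y, hSM y hy⟩) : x = y := by
  classical
  by_contra hne
  have h1 := congrArg (fun P => eval x (derivative P)) hprod
  rw [← Finset.mul_prod_erase S _ hx] at h1
  simp only [derivative_sub, derivative_C, sub_zero, derivative_map, eval_map_algebraMap,
    derivative_mul, zero_mul, zero_add, eval_mul, eval_add, eval_C, derivative_X, eval_one, one_mul, eval_sub,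
    eval_X, sub_self, add_zero, eval_prod] at h1
  have h2 : aeval (⟨x, hSM x hx⟩ : M) (derivative g) = algebraMap k M g.leadingCoeff *
      ∏ z ∈ (S.erase x).attach, ((⟨x, hSM x hx⟩ : M) - ⟨z, hSM z (Finset.mem_of_mem_erase z.2)⟩) := by
    apply Subtype.ext
    rw [coe_aeval_sub, h1, MulMemClass.coe_mul]
    congr 1
    rw [← Finset.prod_attach, SubmonoidClass.coe_finsetProd]
    rfl
  have h3 := congrArg ω h2
  rw [← aeval_algHom_apply, map_mul, map_prod, Finset.prod_eq_zero
    (Finset.mem_attach _ ⟨y, Finset.mem_erase.2 ⟨fun h => hne h.symm, hy⟩⟩)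
    (by rw [map_sub, hxy, sub_self]), mul_zero] at h3
  refine hgood _ ?_ h3
  have h4 : aeval (⟨x, hSM x hx⟩ : M) g = ⟨_, hT⟩ := by
    apply Subtype.ext
    rw [coe_aeval_sub]
    exact (hS x).1 hx
  rw [← h4, ← aeval_algHom_apply]
  rfl

theorem pt_root (g : k[X]) (hg : 0 < g.natDegree) (S : Finset Ω)
    (hprod : g.map (algebraMap k Ω) - C (tv k F Ω) =
        C (algebraMap k Ω g.leadingCoeff) * ∏ x ∈ S, (X - C x))
    (M : Subalgebra k Ω) (hSM : ∀ x ∈ S, x ∈ M) (hT : tv k F Ω ∈ M)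
    (ω : M →ₐ[k] k) (ξ : k) (hξ : g.eval ξ = ω ⟨_, hT⟩) :
    ∃ x, ∃ hx : x ∈ S, ω ⟨x, hSM x hx⟩ = ξ := by
  classical
  have hlc : g.leadingCoeff ≠ 0 := by
    intro h0
    rw [leadingCoeff_eq_zero] at h0
    rw [h0, natDegree_zero] at hg
    omega
  have h1 := congrArg (eval (algebraMap k Ω ξ)) hprod
  rw [eval_sub, eval_C, eval_map_algebraMap, aeval_algebraMap_apply, eval_mul, eval_C,
    eval_prod] at h1
  have h2 : algebraMap k M (g.eval ξ) - ⟨_, hT⟩ = algebraMap k M g.leadingCoeff *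
      ∏ z ∈ S.attach, (algebraMap k M ξ - ⟨z, hSM z z.2⟩) := by
    apply Subtype.ext
    have h3 : (algebraMap k Ω) (g.eval ξ) - tv k F Ω = algebraMap k Ω g.leadingCoeff *
      ∏ z ∈ S, (algebraMap k Ω ξ - z) := by
      simp only [eval_sub, eval_X, eval_C] at h1
      exact h1
    rw [MulMemClass.coe_mul, SubmonoidClass.coe_finsetProd]
    refine h3.trans ?_
    congr 1
    rw [← Finset.prod_attach]
    rfl
  have h3 := congrArg ω h2
  rw [map_sub, ω.commutes, ← hξ, map_mul, map_prod, ω.commutes] at h3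
  have h4 : algebraMap k k (g.eval ξ) = g.eval ξ := rfl
  rw [h4, sub_self] at h3
  have h5 := (mul_eq_zero.1 h3.symm).resolve_left hlc
  obtain ⟨x, -, hx⟩ := Finset.prod_eq_zero_iff.1 h5
  rw [map_sub, ω.commutes, sub_eq_zero] at hx
  exact ⟨x, x.2, hx.symm⟩

theorem card_fixed (p : ℕ) [hp : Fact p.Prime] [CharP k p] (s : ℕ) (hs : 0 < s) :
    ∃ A : Finset k, A.card = p ^ s ∧ ∀ τ ∈ A, τ ^ (p ^ s) = τ := by
  classical
  have hsep : (X ^ (p ^ s) - X : k[X]).Separable :=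
    galois_poly_separable p (p ^ s) (dvd_pow_self p (by omega))
  have h1 : 1 < p ^ s := Nat.one_lt_pow (by omega) hp.out.one_lt
  refine ⟨(X ^ (p ^ s) - X : k[X]).roots.toFinset, ?_, ?_⟩
  · rw [Multiset.toFinset_card_of_nodup (nodup_roots hsep),
      ← (IsAlgClosed.splits (X ^ (p ^ s) - X : k[X])).natDegree_eq_card_roots,
      FiniteField.X_pow_card_sub_X_natDegree_eq k h1]
  · intro τ hτ
    rw [Multiset.mem_toFinset, mem_roots (FiniteField.X_pow_card_sub_X_ne_zero k h1)] at hτ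
    simpa [sub_eq_zero] using hτ

theorem thmMsep_aux (p : ℕ) [hp : Fact p.Prime] [CharP k p] (hodd : Odd p) (g : k[X])
    [IsSplittingField F Ω (gp F g)]
    (hg : 0 < g.natDegree) (hg0 : g.coeff 0 = 0) (heven : Even g.natDegree)
    (hg' : derivative g ≠ 0)
    (hyp : ∀ s0 : ℕ, ∃ s ≥ s0, (∀ i, g.coeff i ^ (p ^ s) = g.coeff i) ∧
      ∀ τ : k, τ ^ (p ^ s) = τ → ∃ x, x ^ (p ^ s) = x ∧ g.eval x = τ) : False := by
  classical
  haveI : FiniteDimensional F Ω := IsSplittingField.finiteDimensional Ω (gp F g)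
  haveI : IsGalois F Ω := IsGalois.of_separable_splitting_field (p := gp F g) (gp_separable g hg')
  obtain ⟨S, hS, hScard, hprod⟩ := exists_roots (F := F) (Ω := Ω) g hg hg'
  obtain ⟨x1, hx1⟩ : S.Nonempty := by
    rw [← Finset.card_pos, hScard]; exact hg
  let N := Fintype.card (Ω ≃ₐ[F] Ω)
  have hN : 1 ≤ N := Fintype.card_pos
  obtain ⟨C2, e0, hbom⟩ := bomM p g hg S hS hScard N hN
  have hT := tv_mem g S x1 hx1 ((hS x1).1 hx1)
  have hintg := adjoin_all_integral g hg S hS hT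
  have hstab := adjoin_stable (k := k) S
  have hSM : ∀ x ∈ S, x ∈ Algebra.adjoin k (S : Set Ω) := fun x hx => Algebra.subset_adjoin hx
  generalize Algebra.adjoin k (S : Set Ω) = M at *
  let T' : M := ⟨_, hT⟩
  have hσk : ∀ (σ : Ω ≃ₐ[F] Ω) (c : k), σ (algebraMap k Ω c) = algebraMap k Ω c := by
    intro σ c
    rw [IsScalarTower.algebraMap_apply k F Ω]
    exact σ.commutes _
  have hσT : ∀ (σ : Ω ≃ₐ[F] Ω), σ (tv k F Ω) = tv k F Ω := fun σ => σ.commutes _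
  have hσS : ∀ (σ : Ω ≃ₐ[F] Ω), ∀ x ∈ S, σ x ∈ S := by
    intro σ x hx
    rw [hS] at *
    have := semi_aeval 1 (σ : Ω →+* Ω) (fun c => by rw [pow_one]; exact hσk σ c) g
      (fun i => pow_one _) x
    rw [hx] at this
    exact this.symm.trans (hσT σ)
  have hσM : ∀ (σ : Ω ≃ₐ[F] Ω), ∀ x ∈ M, σ x ∈ M := fun σ =>
    hstab (σ : Ω →+* Ω) 1 (fun c => by rw [pow_one]; exact hσk σ c) (hσS σ)
  let act : (Ω ≃ₐ[F] Ω) → M →ₐ[k] M := fun σ =>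
    { toFun := fun b => ⟨σ b, hσM σ b b.2⟩
      map_one' := by ext; simp
      map_mul' := by intro a b; ext; simp
      map_zero' := by ext; simp
      map_add' := by intro a b; ext; simp
      commutes' := by intro c; ext; exact hσk σ c }
  have hactT : ∀ σ, act σ T' = T' := fun σ => Subtype.ext (hσT σ)
  have hW : ∀ τ : k, ∃ ω : M →ₐ[k] k, ω T' = τ := by
    intro τ
    refine lemE T' ?_ hintg τ
    intro P Q hPQ
    have h1 := congrArg (Subtype.val) hPQ
    rw [coe_aeval_sub, coe_aeval_sub] at h1
    exact aeval_tv_inj (F := F) (Ω := Ω) h1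
  choose W hW using hW
  let bad : Finset k := (derivative g).roots.toFinset.image (fun ξ => g.eval ξ)
  have hbad : ∀ τ, τ ∉ bad → ∀ ξ, g.eval ξ = τ → (derivative g).eval ξ ≠ 0 := by
    intro τ hτ ξ hξ h0
    apply hτ
    rw [Finset.mem_image]
    exact ⟨ξ, by rw [Multiset.mem_toFinset, mem_roots hg']; exact h0, hξ⟩
  obtain ⟨s, hs, hcoef, hsurj⟩ := hyp (e0 + 1 + (N - 1) * C2 + 2 * N * N * bad.card)
  obtain ⟨A, hAcard, hA⟩ := card_fixed (k := k) p s (by omega)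
  let Good := A \ bad
  have hGood : p ^ s ≤ Good.card + bad.card := by
    rw [← hAcard]
    have := Finset.le_card_sdiff bad A
    simp only [Good]
    omega
  obtain ⟨ρ, hρ⟩ := exists_semi (F := F) (Ω := Ω) p g s hcoef
  obtain ⟨σs, hσs⟩ := inf_arg p hodd g hg hg0 heven S hS hScard hprod s hcoef ρ hρ
  have hp0 : p ^ s ≠ 0 := pow_ne_zero _ hp.out.ne_zero
  have hρS : ∀ x ∈ S, ρ x ∈ S := by
    intro x hx
    rw [hS] at *
    rw [← semi_aeval _ ρ hρ.1 g hcoef, hx, hρ.2]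
  have hρM := hstab ρ _ hρ.1 hρS
  have hpowinj : Function.Injective (fun a : k => a ^ (p ^ s)) := by
    have := (iterateFrobenius k p s).injective
    intro a b hab
    apply this
    simpa [iterateFrobenius_def] using hab
  -- the total set of points
  let Tot : Finset (M →ₐ[k] k) := (Good ×ˢ (Finset.univ : Finset (Ω ≃ₐ[F] Ω))).image
    (fun x => (W x.1).comp (act x.2))
  have hval : ∀ τ σ, ((W τ).comp (act σ)) T' = τ := by
    intro τ σ
    rw [AlgHom.comp_apply, hactT, hW]
  have hTotcard : Tot.card = Good.card * N := by
    rw [Finset.card_image_of_injOn, Finset.card_product]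
    · rfl
    · rintro ⟨τ, σ⟩ h1 ⟨τ', σ'⟩ h2 heq
      simp only at heq
      have hτ : τ = τ' := by
        rw [← hval τ σ, heq, hval]
      subst hτ
      have hτg : τ ∈ Good := (Finset.mem_product.1 (Finset.mem_coe.1 h1)).1
      have hτb : τ ∉ bad := (Finset.mem_sdiff.1 hτg).2
      have : σ = σ' := by
        refine gal_ext g hg σ σ' fun x hx => ?_
        have hxS := (hS x).2 hx
        refine pt_inj g S hS hprod M hSM hT (W τ) (fun ξ hξ => hbad τ hτb ξ (hξ.trans (hW τ)))
          _ _ (hσS σ x hxS) (hσS σ' x hxS) ?_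
        exact congrArg (fun f : M →ₐ[k] k => f ⟨x, hSM x hxS⟩) heq
      rw [this]
  let Zs : (Ω ≃ₐ[F] Ω) → Finset (M →ₐ[k] k) := fun σ =>
    Tot.filter (fun ω => ∀ x y : M, (y : Ω) = ρ (σ x) → ω y = ω x ^ (p ^ s))
  have hcover : Tot ⊆ (Finset.univ.erase σs).biUnion Zs := by
    intro ω hω
    obtain ⟨⟨τ, σ⟩, hmem, hωeq⟩ := Finset.mem_image.1 hω
    have hτg : τ ∈ Good := (Finset.mem_product.1 hmem).1
    have hτb : τ ∉ bad := (Finset.mem_sdiff.1 hτg).2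
    have hτQ : τ ^ (p ^ s) = τ := hA τ (Finset.mem_sdiff.1 hτg).1
    have hωT : ω T' = τ := by rw [← hωeq]; exact hval τ σ
    obtain ⟨ω₁, hω₁⟩ := lemFrob p M s ρ hρ.1 hρM ω
    have hω₁T : ω₁ T' = τ := by
      apply hpowinj
      simp only
      rw [hω₁ T', hτQ, ← hωT]
      congr 1
      exact Subtype.ext hρ.2
    obtain ⟨σ', hσ'⟩ := lemT (H := Ω ≃ₐ[F] Ω) M (fun h c => hσk h c)
      (fun h b hb => hσM h b hb) ω ω₁ (by
        intro b hb
        refine lemJ M T' (aeval_tv_inj (F := F) (Ω := Ω)) ω ω₁ (hωT.trans hω₁T.symm) b ?_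
        obtain ⟨a, ha⟩ := (IsGalois.mem_range_algebraMap_iff_fixed (F := F) (b : Ω)).2 hb
        rw [← ha]
        exact mem_adjoin_tv a)
    have hX : ∀ x y : M, (y : Ω) = ρ (σ' x) → ω y = ω x ^ (p ^ s) := by
      intro x y hxy
      rw [hσ' x, hω₁]
      congr 1
      exact Subtype.ext hxy
    rw [Finset.mem_biUnion]
    refine ⟨σ', ?_, Finset.mem_filter.2 ⟨hω, hX⟩⟩
    rw [Finset.mem_erase]
    refine ⟨?_, Finset.mem_univ _⟩
    rintro rfl
    obtain ⟨ξ, hξQ, hξ⟩ := hsurj τ hτQ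
    obtain ⟨x, hx, hxξ⟩ := pt_root g hg S hprod M hSM hT ω ξ (hξ.trans hωT.symm)
    refine hσs x hx ?_
    have hyS := hρS _ (hσS σ' x hx)
    refine pt_inj g S hS hprod M hSM hT ω (fun ξ hξ => hbad τ hτb ξ (hξ.trans hωT))
      _ _ hyS hx ?_
    rw [hX ⟨x, hSM x hx⟩ ⟨_, hSM _ hyS⟩ rfl, hxξ, hξQ]
  have hZbound : ∀ σ, 2 * N * (Zs σ).card ≤ (2 * N + 1) * p ^ s + C2 := by
    intro σ
    refine hbom s (by omega) (ρ.comp (σ : Ω →+* Ω)) (semi_comp hρ σ)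
      (fun x hx => hρS _ (hσS σ x hx)) (Zs σ) ?_
    intro ω hω x y hxy
    exact (Finset.mem_filter.1 hω).2 x y hxy
  have h1 : Tot.card ≤ ∑ σ ∈ Finset.univ.erase σs, (Zs σ).card :=
    (Finset.card_le_card hcover).trans Finset.card_biUnion_le
  have h2 : 2 * N * Tot.card ≤ (N - 1) * ((2 * N + 1) * p ^ s + C2) := by
    refine (Nat.mul_le_mul_left _ h1).trans ?_
    rw [Finset.mul_sum]
    refine (Finset.sum_le_card_nsmul _ _ _ (fun σ _ => hZbound σ)).trans ?_
    rw [Finset.card_erase_of_mem (Finset.mem_univ _), smul_eq_mul]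
    rfl
  rw [hTotcard] at h2
  have h3 : s < p ^ s := Nat.lt_pow_self hp.out.one_lt
  generalize p ^ s = Q at *
  generalize Good.card = G at *
  generalize bad.card = β at *
  obtain ⟨m, hm⟩ : ∃ m, N = m + 1 := ⟨N - 1, by omega⟩
  generalize N = N' at *
  subst hm
  simp only [Nat.add_sub_cancel] at *
  have h4 : 2 * (m + 1) * ((Q) * (m + 1)) ≤ 2 * (m + 1) * ((G + β) * (m + 1)) :=
    Nat.mul_le_mul_left _ (Nat.mul_le_mul_right _ hGood)
  nlinarith [h2, h3, h4, hs, Nat.zero_le (m * Q)]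

end Cov

open Polynomial

theorem thmMsep {k : Type} [Field k] [IsAlgClosed k] (p : ℕ) [Fact p.Prime] [CharP k p]
    (hodd : Odd p) (g : k[X]) (hg : 0 < g.natDegree) (hg0 : g.coeff 0 = 0)
    (heven : Even g.natDegree) (hg' : derivative g ≠ 0)
    (hyp : ∀ s0, ∃ s ≥ s0, (∀ i, g.coeff i ^ (p^s) = g.coeff i) ∧
      ∀ τ : k, τ^(p^s) = τ → ∃ x, x^(p^s) = x ∧ g.eval x = τ) : False :=
  thmMsep_aux (F := RatFunc k) (Ω := (gp (RatFunc k) g).SplittingField) p hodd g hg hg0 heven hg' hyp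

theorem thmM {k : Type} [Field k] [IsAlgClosed k] (p : ℕ) [Fact p.Prime] [CharP k p]
    (hodd : Odd p) : ∀ (m : ℕ) (g : k[X]), g.natDegree = m → 0 < g.natDegree → g.coeff 0 = 0 →
    Even g.natDegree →
    (∀ s0, ∃ s ≥ s0, (∀ i, g.coeff i ^ (p^s) = g.coeff i) ∧
      ∀ τ : k, τ^(p^s) = τ → ∃ x, x^(p^s) = x ∧ g.eval x = τ) → False := by
  intro m
  induction m using Nat.strong_induction_on with
  | _ m ih =>
  intro g hm hg hg0 heven hyp
  by_cases hg' : derivative g = 0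
  · have hp0 : p ≠ 0 := (Fact.out : p.Prime).ne_zero
    have hp1 : 1 < p := (Fact.out : p.Prime).one_lt
    have hinj : Function.Injective (frobenius k p) := frobenius_inj k p
    have hexp : expand k p (contract p g) = g := expand_contract p hg' hp0
    let h1 : k[X] := (contract p g).map ((frobeniusEquiv k p).symm : k →+* k)
    have hh : h1 ^ p = g := by
      rw [← map_frobenius_expand p h1]
      simp only [h1]
      rw [← map_expand, Polynomial.map_map, hexp]
      have : (frobenius k p).comp ((frobeniusEquiv k p).symm : k →+* k) = RingHom.id k := by
        ext x; exact frobenius_apply_frobeniusEquiv_symm k p x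
      rw [this, Polynomial.map_id]
    have hdeg : g.natDegree = p * h1.natDegree := by rw [← hh, natDegree_pow]
    have hpos : 0 < h1.natDegree := by
      rcases Nat.eq_zero_or_pos h1.natDegree with h | h
      · rw [h] at hdeg; omega
      · exact h
    have hc : ∀ i, h1.coeff i ^ p = g.coeff (i * p) := by
      intro i
      rw [← coeff_contract hp0]
      simp only [h1, coeff_map]
      exact frobenius_apply_frobeniusEquiv_symm k p _
    have hev : ∀ x, h1.eval x ^ p = g.eval x := by
      intro x; rw [← hh, eval_pow]
    refine ih h1.natDegree ?_ h1 rfl hpos ?_ ?_ ?_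
    · rw [← hm, hdeg]; nlinarith
    · have := hc 0
      rw [zero_mul, hg0] at this
      exact pow_eq_zero_iff hp0 |>.1 this
    · rw [hdeg, Nat.even_mul] at heven
      rcases heven with h | h
      · exact absurd h (Nat.not_even_iff_odd.2 hodd)
      · exact h
    · intro s0
      obtain ⟨s, hs, h2, h3⟩ := hyp s0
      refine ⟨s, hs, fun i => ?_, fun τ hτ => ?_⟩
      · apply hinj
        simp only [frobenius_def]
        rw [← pow_mul, mul_comm, pow_mul, hc, h2]
      · obtain ⟨x, hx, hx2⟩ := h3 (τ ^ p) (by rw [← pow_mul, mul_comm, pow_mul, hτ])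
        refine ⟨x, hx, ?_⟩
        apply hinj
        simp only [frobenius_def]
        rw [hev, hx2]
  · exact thmMsep p hodd g hg hg0 heven hg' hyp

/-- The fixed field of the r-th power of the relative Frobenius. -/
noncomputable def fixF (K k : Type) [Field K] [Fintype K] [Field k] [Algebra K k] (r : ℕ) :
    IntermediateField K k :=
  { AlgHom.equalizer ((FiniteField.frobeniusAlgHom K k) ^ r) (AlgHom.id K k) with
    inv_mem' := by
      intro x hx
      have hx' : ((FiniteField.frobeniusAlgHom K k) ^ r) x = x := hx
      change ((FiniteField.frobeniusAlgHom K k) ^ r) x⁻¹ = x⁻¹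
      rw [map_inv₀, hx'] }

theorem mem_fixF {K k : Type} [Field K] [Fintype K] [Field k] [Algebra K k] (r : ℕ) (x : k) :
    x ∈ fixF K k r ↔ x ^ (Fintype.card K ^ r) = x := by
  have h : ∀ r : ℕ, ((FiniteField.frobeniusAlgHom K k) ^ r) x = x ^ (Fintype.card K ^ r) := by
    intro r
    induction r with
    | zero => simp
    | succ r ih =>
      rw [pow_succ', AlgHom.mul_apply, ih, FiniteField.coe_frobeniusAlgHom]
      change (x ^ _) ^ _ = _
      rw [← pow_mul, ← pow_succ]
  rw [← h r]; rfl

theorem card_fixF {K k : Type} [Field K] [Fintype K] [Field k] [IsAlgClosed k] [Algebra K k]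
    (p n : ℕ) (hp : p.Prime) (hn : 0 < n) [CharP k p] (hK : Fintype.card K = p ^ n)
    (r : ℕ) (hr : 0 < r) : Nat.card (fixF K k r) = Fintype.card K ^ r := by
  have hQ : 1 < Fintype.card K ^ r := Nat.one_lt_pow hr.ne' Fintype.one_lt_card
  set Q := Fintype.card K ^ r with hQd
  have h0 : (X ^ Q - X : k[X]) ≠ 0 := FiniteField.X_pow_card_sub_X_ne_zero k hQ
  have hs : (X ^ Q - X : k[X]).Separable := by
    apply galois_poly_separable p
    rw [hQd, hK, ← pow_mul]
    exact dvd_pow_self p (by positivity)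
  have h1 := card_rootSet_eq_natDegree (K := k) hs (IsAlgClosed.splits _)
  rw [FiniteField.X_pow_card_sub_X_natDegree_eq k hQ, ← Nat.card_eq_fintype_card] at h1
  rw [← h1]
  apply Nat.card_congr
  refine Equiv.subtypeEquivRight fun x => ?_
  rw [mem_rootSet, mem_fixF]
  rw [and_iff_right h0]
  simp [sub_eq_zero, hQd]

theorem g0_deg {K : Type} [Field K] (p d : ℕ) [CharP K p] (f : K[X]) (hdeg : f.natDegree = d)
    (hpd : ¬ p ∣ d) : (f.comp (X + 1) - f).natDegree = d - 1 := by
  have hd : d ≠ 0 := fun h => hpd (h ▸ dvd_zero p)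
  have hdK : (d : K) ≠ 0 := fun h => hpd ((CharP.cast_eq_zero_iff K p d).1 h)
  have hf0 : f ≠ 0 := by rintro rfl; simp at hdeg; exact hd hdeg.symm
  have e : f.comp (X + 1) = taylor 1 f := by rw [taylor_apply, C_1]
  have hlt : (f.comp (X+1) - f).natDegree ≤ d - 1 := by
    rw [natDegree_le_iff_coeff_eq_zero]
    intro N hN
    have hN' : d ≤ N := by omega
    rw [e, coeff_sub]
    rcases hN'.eq_or_lt with h | h
    · subst h
      have : (taylor 1 f).coeff f.natDegree = f.coeff f.natDegree := by
        rw [taylor_coeff, hasseDeriv_natDegree_eq_C, eval_C]; rfl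
      rw [← hdeg, this, sub_self]
    · rw [coeff_eq_zero_of_natDegree_lt (by rw [natDegree_taylor]; omega),
        coeff_eq_zero_of_natDegree_lt (by omega), sub_self]
  refine le_antisymm hlt (le_natDegree_of_ne_zero ?_)
  have hle : (hasseDeriv (d-1) f).natDegree ≤ 1 :=
    (natDegree_hasseDeriv_le f (d-1)).trans (by omega)
  rw [e, coeff_sub, taylor_coeff, eq_X_add_C_of_natDegree_le_one hle, hasseDeriv_coeff,
    hasseDeriv_coeff]
  have h1 : 1 + (d - 1) = d := by omega
  have h2 : d.choose (d-1) = d := by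
    conv_lhs => rw [← h1]
    rw [Nat.add_sub_cancel_left, add_comm, Nat.choose_succ_self_right]; omega
  have h3 : f.coeff d ≠ 0 := by
    rw [← hdeg]; exact leadingCoeff_ne_zero.2 hf0
  simp only [h1, h2, zero_add, Nat.choose_self, eval_add, eval_mul, eval_C, eval_X, mul_one,
    Nat.cast_one, one_mul, add_sub_cancel_right]
  exact mul_ne_zero hdK h3

theorem exceptional_planar_deg_coprime_p_even
    (p n d : ℕ) (hp : p.Prime) (hodd : Odd p) (hn : 0 < n)
    (K : Type) [Field K] [Fintype K] (hK : Fintype.card K = p ^ n)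
    (f : K[X]) (hdeg : f.natDegree = d) (hpd : ¬ p ∣ d)
    (hexc : IsExceptionalPlanarOdd f) :
    Even d := by
  by_contra hd
  rw [Nat.not_even_iff_odd] at hd
  haveI : Fact p.Prime := ⟨hp⟩
  haveI : CharP K p := by
    obtain ⟨p', hp', m, hpr, hc⟩ := FiniteField.card' K
    have : p' = p := by
      have h1 : p' ∣ p ^ n := by rw [← hK, hc]; exact dvd_pow_self p' m.2.ne'
      exact (Nat.prime_dvd_prime_iff_eq hpr hp).1 (hpr.dvd_of_dvd_pow h1)
    exact this ▸ hp'
  let k := AlgebraicClosure K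
  haveI : CharP k p := charP_of_injective_algebraMap (algebraMap K k).injective p
  let g0 : K[X] := f.comp (X + 1) - f
  have hg0d : g0.natDegree = d - 1 := g0_deg p d f hdeg hpd
  let gK : K[X] := g0 - C (g0.coeff 0)
  let g : k[X] := gK.map (algebraMap K k)
  have hgd : g.natDegree = d - 1 := by
    rw [natDegree_map, natDegree_sub_C, hg0d]
  -- surjectivity on the fixed fields
  have key : ∀ r : ℕ, 0 < r → (∀ (L : Type) [Field L] [Fintype L] [Algebra K L],
      Fintype.card L = Fintype.card K ^ r → IsPlanarOdd (fun x : L => Polynomial.aeval x f)) →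
      ∀ τ : k, τ ^ (Fintype.card K ^ r) = τ →
        ∃ x : k, x ^ (Fintype.card K ^ r) = x ∧ g.eval x = τ := by
    intro r hr h τ hτ
    have hcard := card_fixF (k := k) p n hp hn hK r hr
    haveI : Finite (fixF K k r) := Nat.finite_of_card_ne_zero (by
      rw [hcard]; exact pow_ne_zero _ Fintype.card_ne_zero)
    letI : Fintype (fixF K k r) := Fintype.ofFinite _
    have hpl := h (fixF K k r) (by rw [← Nat.card_eq_fintype_card, hcard]) 1 one_ne_zero
    obtain ⟨x, hx⟩ := hpl.2 (⟨τ, (mem_fixF r τ).2 hτ⟩ + algebraMap K _ (g0.coeff 0))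
    refine ⟨x, (mem_fixF r _).1 x.2, ?_⟩
    have hx2 := congrArg (algebraMap (fixF K k r) k) hx
    simp only [map_sub, map_add, ← aeval_algebraMap_apply, map_one,
      ← IsScalarTower.algebraMap_apply] at hx2
    have hx3 : aeval (algebraMap (fixF K k r) k x) g0 = τ + algebraMap K k (g0.coeff 0) := by
      rw [map_sub, aeval_comp, map_add, aeval_X, map_one]
      exact hx2
    change eval (algebraMap (fixF K k r) k x) g = τ
    rw [eval_map_algebraMap, map_sub, hx3, aeval_C, add_sub_cancel_right]
  have hbig : ∀ s0, ∃ s ≥ s0, (∀ i, g.coeff i ^ (p^s) = g.coeff i) ∧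
      ∀ τ : k, τ^(p^s) = τ → ∃ x, x^(p^s) = x ∧ g.eval x = τ := by
    intro s0
    obtain ⟨r, ⟨hr, hpl⟩, hrs⟩ := hexc.exists_gt s0
    have hQ : p ^ (n * r) = Fintype.card K ^ r := by rw [hK, pow_mul]
    refine ⟨n * r, ?_, ?_⟩
    · nlinarith
    · rw [hQ]
      refine ⟨fun i => ?_, key r hr hpl⟩
      rw [coeff_map, ← map_pow, FiniteField.pow_card_pow]
  have hc0 : g.coeff 0 = 0 := by simp [g, gK]
  rcases Nat.eq_zero_or_pos (d - 1) with h1 | h1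
  · obtain ⟨s, -, -, h⟩ := hbig 0
    obtain ⟨x, -, hx⟩ := h 1 (one_pow _)
    rw [eq_C_of_natDegree_eq_zero (hgd.trans h1), hc0] at hx
    simp at hx
  · refine thmM p hodd (d - 1) g hgd (hgd ▸ h1) hc0 ?_ hbig
    rw [hgd]
    exact Nat.Odd.sub_odd hd odd_one
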